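/- arXiv:1906.03062 — 4 statements merged into one kernel-verified Lean document; each statement's English description precedes it below -/
import Mathlib

section
/- Let n ≥ 2 and let τ = 2k-1+ε with k ≥ 1 an integer and ε ∈ {0,1}. Define D(n,τ) = binom(n+k-2+ε, n-1) + binom(n+k-2, n-1) (and correspondingly D(n,τ+1) for the next value of τ, using its own parity decomposition). Let N be a real number with D(n,τ) < N ≤ D(n,τ+1). Then 𝒫_τ, the space of real polynomials of degree at most τ, is a ULB-space for dimension n and cardinality N: there exist nodes -1 ≤ α_1 < ⋯ < α_{k+ε} < 1 and weights ρ_1,…,ρ_{k+ε} > 0 forming a 1/N-quadrature rule exact for 𝒫_τ, and for every function h absolutely monotone on [-1,1) there exists a polynomial f ∈ 𝒫_τ that is positive definite, satisfies f(t) ≤ h(t) for all t ∈ [-1,1), and satisfies f(α_i) = h(α_i) for i = 1,…,k+ε. -/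
open MeasureTheory Finset
open scoped Classical

/-- The (unnormalized) Gegenbauer weight `(1 - t²)^((n-3)/2)`. -/
noncomputable def gegWeight (n : ℕ) (t : ℝ) : ℝ := (1 - t ^ 2) ^ (((n : ℝ) - 3) / 2)

/-- Integration against the probability measure `μ_n` on `[-1,1]` with density
proportional to `(1 - t²)^((n-3)/2)`. -/
noncomputable def gegInt (n : ℕ) (f : ℝ → ℝ) : ℝ :=
  (∫ t in Set.Icc (-1 : ℝ) 1, gegWeight n t)⁻¹ *
    ∫ t in Set.Icc (-1 : ℝ) 1, f t * gegWeight n t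

/-- `P : ℕ → ℝ[X]` is the family of Gegenbauer polynomials for dimension `n`:
`deg P_i = i`, `P_i(1) = 1`, pairwise orthogonal in `L²(μ_n)`. -/
def IsGegenbauer (n : ℕ) (P : ℕ → Polynomial ℝ) : Prop :=
  (∀ i, (P i).natDegree = i) ∧ (∀ i, (P i).eval 1 = 1) ∧
    ∀ i j, i ≠ j → gegInt n (fun t => (P i).eval t * (P j).eval t) = 0

/-- A `1/N`-quadrature rule with nodes `α` and weights `ρ`, exact for a set `Λ`
of functions on `[-1,1]`. -/
def IsQuadratureRule (n : ℕ) (N : ℝ) {k : ℕ} (α ρ : Fin k → ℝ)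
    (Λ : Set (ℝ → ℝ)) : Prop :=
  (∀ i, -1 ≤ α i) ∧ (∀ i, α i < 1) ∧ StrictMono α ∧ (∀ i, 0 < ρ i) ∧
    ∀ f ∈ Λ, gegInt n f = f 1 / N + ∑ i, ρ i * f (α i)

/-- `h` is absolutely monotone on `[-1,1)`: infinitely differentiable there with all
derivatives (including `h` itself) nonnegative. -/
def AbsMonOn (h : ℝ → ℝ) : Prop :=
  ContDiffOn ℝ (⊤ : ℕ∞) h (Set.Ico (-1 : ℝ) 1) ∧
    ∀ (m : ℕ), ∀ t ∈ Set.Ico (-1 : ℝ) 1,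
      0 ≤ iteratedDerivWithin m h (Set.Ico (-1 : ℝ) 1) t

/-- The space `𝒫_m` of real polynomials of degree at most `m`, as functions on `ℝ`. -/
def polySpace (m : ℕ) : Set (ℝ → ℝ) :=
  {f | ∃ p : Polynomial ℝ, p.natDegree ≤ m ∧ f = fun t => p.eval t}

/-- The Delsarte–Goethals–Seidel bound `D(n,τ)`; for odd `τ = 2k-1` it equals
`2·C(n+k-2, n-1)`, and for even `τ = 2k` it equals `C(n+k-1, n-1) + C(n+k-2, n-1)`. -/
def DGS (n τ : ℕ) : ℕ :=
  if τ % 2 = 1 then 2 * Nat.choose (n + (τ + 1) / 2 - 2) (n - 1)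
  else Nat.choose (n + τ / 2 - 1) (n - 1) + Nat.choose (n + τ / 2 - 2) (n - 1)

section helpers
open Polynomial

open Polynomial in
theorem gw_eq (n : ℕ) (t : ℝ) (ht : t ∈ Set.Ioo (-1:ℝ) 1) :
    gegWeight n t = (1 - t^2) ^ (((n:ℝ) - 2)/2) * (Real.sqrt (1 - t^2))⁻¹ := by
  have h : 0 < 1 - t^2 := by nlinarith [ht.1, ht.2]
  rw [gegWeight, Real.sqrt_eq_rpow, ← Real.rpow_neg h.le, ← Real.rpow_add h]
  congr 1; ring

theorem gw_pos (n : ℕ) (t : ℝ) (ht : t ∈ Set.Ioo (-1:ℝ) 1) : 0 < gegWeight n t := by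
  have h : 0 < 1 - t^2 := by nlinarith [ht.1, ht.2]
  exact Real.rpow_pos_of_pos h _

theorem gw_int (n : ℕ) (hn : 2 ≤ n) (f : ℝ → ℝ) (hf : Continuous f) :
    IntegrableOn (fun t => f t * gegWeight n t) (Set.Icc (-1:ℝ) 1) := by
  have h0 := Polynomial.Chebyshev.intervalIntegrable_sqrt_one_sub_sq_inv
  rw [integrableOn_Icc_iff_integrableOn_Ioo]
  have h1 : IntegrableOn (fun t : ℝ => (Real.sqrt (1 - t^2))⁻¹) (Set.Icc (-1:ℝ) 1) := by
    rw [intervalIntegrable_iff_integrableOn_Icc_of_le (by norm_num)] at h0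
    simpa only [Real.sqrt_inv] using h0
  have hn' : (2:ℝ) ≤ n := by exact_mod_cast hn
  have hc : Continuous (fun t : ℝ => f t * (1 - t^2) ^ (((n:ℝ) - 2)/2)) := by
    apply hf.mul
    apply Continuous.rpow_const (by fun_prop)
    intro x; right; linarith
  have h2 : IntegrableOn (fun t : ℝ => f t * (1 - t^2) ^ (((n:ℝ) - 2)/2) * (Real.sqrt (1 - t^2))⁻¹)
      (Set.Icc (-1:ℝ) 1) := h1.continuousOn_mul hc.continuousOn isCompact_Icc
  refine (h2.mono_set Set.Ioo_subset_Icc_self).congr_fun ?_ measurableSet_Ioo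
  intro t ht
  simp only [gw_eq n t ht]; ring

theorem gw_pos_int (n : ℕ) (hn : 2 ≤ n) (p : Polynomial ℝ) (hp : p ≠ 0)
    (h : ∀ t ∈ Set.Icc (-1:ℝ) 1, 0 ≤ p.eval t) :
    0 < ∫ t in Set.Icc (-1 : ℝ) 1, p.eval t * gegWeight n t := by
  rw [integral_Icc_eq_integral_Ioo, setIntegral_pos_iff_support_of_nonneg_ae]
  · have hsub : Set.Ioo (-1:ℝ) 1 \ (p.roots.toFinset : Set ℝ) ⊆
        Function.support (fun t => p.eval t * gegWeight n t) ∩ Set.Ioo (-1:ℝ) 1 := by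
      rintro t ⟨ht, hr⟩
      refine ⟨?_, ht⟩
      have : p.eval t ≠ 0 := by
        intro h0; apply hr; simp [hp, h0]
      exact mul_ne_zero this (gw_pos n t ht).ne'
    refine lt_of_lt_of_le ?_ (measure_mono hsub)
    rw [measure_sdiff_null ((Finset.finite_toSet _).measure_zero _)]
    simp
  · filter_upwards [ae_restrict_mem measurableSet_Ioo] with t ht
    exact mul_nonneg (h t (Set.Ioo_subset_Icc_self ht)) (gw_pos n t ht).le
  · exact (gw_int n hn _ p.continuous).mono_set Set.Ioo_subset_Icc_self

theorem gw_mass (n : ℕ) (hn : 2 ≤ n) : 0 < ∫ t in Set.Icc (-1 : ℝ) 1, gegWeight n t := by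
  have := gw_pos_int n hn 1 one_ne_zero (by simp)
  simpa using this

/-- the functional on polynomials -/
noncomputable def gI (n : ℕ) (hn : 2 ≤ n) : Polynomial ℝ →ₗ[ℝ] ℝ where
  toFun p := gegInt n (fun t => p.eval t)
  map_add' p q := by
    simp only [gegInt, Polynomial.eval_add, add_mul]
    rw [integral_add (gw_int n hn _ p.continuous) (gw_int n hn _ q.continuous)]; ring
  map_smul' c p := by
    simp only [gegInt, Polynomial.eval_smul, smul_eq_mul, RingHom.id_apply, mul_assoc]
    rw [integral_const_mul]; ring

theorem gI_apply (n : ℕ) (hn : 2 ≤ n) (p : Polynomial ℝ) :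
    gI n hn p = gegInt n (fun t => p.eval t) := rfl

theorem gI_one (n : ℕ) (hn : 2 ≤ n) : gI n hn 1 = 1 := by
  rw [gI_apply, gegInt]
  simp [(gw_mass n hn).ne']

theorem gI_pos (n : ℕ) (hn : 2 ≤ n) (p : Polynomial ℝ) (hp : p ≠ 0)
    (h : ∀ t ∈ Set.Icc (-1:ℝ) 1, 0 ≤ p.eval t) : 0 < gI n hn p := by
  rw [gI_apply, gegInt]
  exact mul_pos (inv_pos.2 (gw_mass n hn)) (gw_pos_int n hn p hp h)

theorem gI_pearson (n : ℕ) (hn : 2 ≤ n) (p : Polynomial ℝ) :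
    gI n hn ((1 - Polynomial.X^2) * Polynomial.derivative p) = ((n:ℝ) - 1) * gI n hn (Polynomial.X * p) := by
  have hn' : (2:ℝ) ≤ n := by exact_mod_cast hn
  have i1 := gw_int n hn (fun t => ((1 - Polynomial.X^2) * Polynomial.derivative p).eval t) (Polynomial.continuous _)
  have i2 := gw_int n hn (fun t => (Polynomial.X * p).eval t) (Polynomial.continuous _)
  have key := intervalIntegral.integral_eq_sub_of_hasDerivAt_of_le (a := -1) (b := 1)
    (f := fun t : ℝ => p.eval t * (1 - t^2) ^ (((n:ℝ) - 1)/2))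
    (f' := fun t => ((1 - Polynomial.X^2) * Polynomial.derivative p).eval t * gegWeight n t
       - ((n:ℝ) - 1) * ((Polynomial.X * p).eval t * gegWeight n t)) (by norm_num)
    (by
      apply Continuous.continuousOn
      apply p.continuous.mul
      apply Continuous.rpow_const (by fun_prop)
      intro x; right; linarith)
    (by
      intro t ht
      have h : 0 < 1 - t^2 := by nlinarith [ht.1, ht.2]
      have h1 := (p.hasDerivAt t).mul (((hasDerivAt_const t (1:ℝ)).sub (hasDerivAt_pow 2 t)).rpow_const
        (p := ((n:ℝ) - 1)/2) (Or.inl h.ne'))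
      refine HasDerivAt.congr_deriv h1 ?_
      have e : (1 - t^2) ^ (((n:ℝ) - 1)/2) = (1 - t^2) * gegWeight n t := by
        rw [gegWeight, mul_comm, ← Real.rpow_add_one h.ne']; congr 1; ring
      have e2 : (1 - t^2) ^ (((n:ℝ) - 1)/2 - 1) = gegWeight n t := by
        rw [gegWeight]; congr 1; ring
      simp only [Pi.sub_apply]
      rw [e, e2]
      simp; ring)
    (by
      rw [intervalIntegrable_iff_integrableOn_Icc_of_le (by norm_num)]
      exact i1.sub (i2.const_mul _))
  have z : (0:ℝ) ^ (((n:ℝ) - 1)/2) = 0 := Real.zero_rpow (by linarith)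
  rw [intervalIntegral.integral_of_le (by norm_num), ← integral_Icc_eq_integral_Ioc,
    integral_sub i1 (i2.const_mul _), integral_const_mul] at key
  norm_num [z] at key
  rw [gI_apply, gI_apply, gegInt, gegInt]
  simp
  rw [sub_eq_zero.1 key]; ring

open Polynomial in
theorem expand_fam (F : ℕ → ℝ[X]) (hd : ∀ i, (F i).natDegree ≤ i) (hc : ∀ i, (F i).coeff i ≠ 0)
    (m : ℕ) : ∀ p : ℝ[X], p.degree < m → ∃ c : ℕ → ℝ, p = ∑ l ∈ range m, C (c l) * F l := by
  induction m with
  | zero =>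
    intro p hp
    refine ⟨0, ?_⟩
    simp only [Nat.cast_zero] at hp
    have : p = 0 := by
      by_contra h0
      rw [degree_eq_natDegree h0] at hp
      exact absurd hp (by simp)
    simp [this]
  | succ m ih =>
    intro p hp
    have h1 : (p - C (p.coeff m / (F m).coeff m) * F m).degree < m := by
      rw [Polynomial.degree_lt_iff_coeff_zero]
      intro j hj
      rcases Nat.eq_or_lt_of_le hj with h | h
      · subst h; simp [hc m]
      · have e1 : p.coeff j = 0 := (Polynomial.degree_lt_iff_coeff_zero _ _).1 hp j (by exact_mod_cast h)
        have e2 : (F m).coeff j = 0 := Polynomial.coeff_eq_zero_of_natDegree_lt (lt_of_le_of_lt (hd m) h)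
        simp [e1, e2]
    obtain ⟨c, hcc⟩ := ih _ h1
    refine ⟨Function.update c m (p.coeff m / (F m).coeff m), ?_⟩
    rw [Finset.sum_range_succ]
    have : ∑ l ∈ range m, C (Function.update c m (p.coeff m / (F m).coeff m) l) * F l
        = ∑ l ∈ range m, C (c l) * F l := by
      apply Finset.sum_congr rfl
      intro l hl
      rw [Function.update_of_ne (Finset.mem_range.1 hl).ne]
    rw [this, ← hcc]; simp

noncomputable def al (n i : ℕ) : ℝ := (i:ℝ) / (2 * i + n - 2)
noncomputable def ga (n i : ℕ) : ℝ := 1 - al n i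

theorem al_zero (n : ℕ) : al n 0 = 0 := by simp [al]
theorem al_nonneg (n i : ℕ) (hn : 2 ≤ n) : 0 ≤ al n i := by
  have hn' : (2:ℝ) ≤ n := by exact_mod_cast hn
  unfold al
  apply div_nonneg (by positivity)
  have : (0:ℝ) ≤ i := by positivity
  linarith
theorem al_le_half (n i : ℕ) (hn : 2 ≤ n) : al n i ≤ 1/2 := by
  have hn' : (2:ℝ) ≤ n := by exact_mod_cast hn
  have hi : (0:ℝ) ≤ i := by positivity
  unfold al
  apply div_le_of_le_mul₀ <;> linarith
theorem al_mono (n : ℕ) (hn : 2 ≤ n) : Monotone (al n) := by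
  have hn' : (2:ℝ) ≤ n := by exact_mod_cast hn
  apply monotone_nat_of_le_succ
  intro i
  rcases Nat.eq_zero_or_pos i with h | h
  · subst h; rw [al_zero]; exact al_nonneg n _ hn
  · have hi : (1:ℝ) ≤ i := by exact_mod_cast h
    unfold al
    push_cast
    rw [div_le_div_iff₀ (by linarith) (by linarith)]
    nlinarith
theorem ga_pos (n i : ℕ) (hn : 2 ≤ n) : 0 < ga n i := by
  have := al_le_half n i hn
  unfold ga; linarith
theorem al_pos (n i : ℕ) (hn : 2 ≤ n) : 0 < al n (i+1) := by
  have hn' : (2:ℝ) ≤ n := by exact_mod_cast hn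
  have hi : (0:ℝ) ≤ i := by positivity
  unfold al; push_cast
  apply div_pos <;> linarith


noncomputable def G (n : ℕ) : ℕ → ℝ[X]
  | 0 => 1
  | 1 => X
  | (i+2) => C (ga n (i+1))⁻¹ * (X * G n (i+1) - C (al n (i+1)) * G n i)

theorem G_zero (n : ℕ) : G n 0 = 1 := by rw [G]
theorem G_one (n : ℕ) : G n 1 = X := by rw [G]
theorem G_rec (n i : ℕ) (hn : 2 ≤ n) :
    X * G n (i+1) = C (ga n (i+1)) * G n (i+2) + C (al n (i+1)) * G n i := by
  rw [G, ← mul_assoc, ← C_mul, mul_inv_cancel₀ (ga_pos n _ hn).ne']; simp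

theorem G_rec' (n i : ℕ) (hn : 2 ≤ n) :
    ((i:ℝ[X]) + (n:ℝ[X]) - 1) * G n (i+2) = (2 * (i:ℝ[X]) + (n:ℝ[X])) * X * G n (i+1) - ((i:ℝ[X])+1) * G n i := by
  have hn' : (2:ℝ) ≤ n := by exact_mod_cast hn
  have hi : (0:ℝ) ≤ i := by positivity
  have h := G_rec n i hn
  have e1 : al n (i+1) * (2 * i + n) = i + 1 := by
    unfold al; push_cast; rw [div_mul_eq_mul_div, div_eq_iff (by linarith)]; ring
  have e2 : ga n (i+1) * (2 * i + n) = i + n - 1 := by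
    unfold ga; rw [sub_mul, e1]; ring
  have c1 : C (al n (i+1)) * (2 * (i:ℝ[X]) + (n:ℝ[X])) = (i:ℝ[X]) + 1 := by
    have := congrArg C e1; simpa [map_ofNat] using this
  have c2 : C (ga n (i+1)) * (2 * (i:ℝ[X]) + (n:ℝ[X])) = (i:ℝ[X]) + (n:ℝ[X]) - 1 := by
    have := congrArg C e2; simpa [map_ofNat] using this
  linear_combination (-(2 * (i:ℝ[X]) + (n:ℝ[X]))) * h - G n (i+2) * c2 - G n i * c1

theorem G_eval_one (n : ℕ) (hn : 2 ≤ n) (i : ℕ) : (G n i).eval 1 = 1 ∧ (G n (i+1)).eval 1 = 1 := by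
  induction i with
  | zero => simp [G_zero, G_one]
  | succ i ih =>
    refine ⟨ih.2, ?_⟩
    have := congrArg (eval 1) (G_rec n i hn)
    simp [ih.1, ih.2] at this
    have h2 := ga_pos n (i+1) hn
    have : ga n (i+1) * (eval 1 (G n (i+2)) - 1) = 0 := by
      unfold ga at *; linear_combination -this
    rcases mul_eq_zero.1 this with h | h
    · exact absurd h h2.ne'
    · linarith

theorem G_eval_neg_one (n : ℕ) (hn : 2 ≤ n) (i : ℕ) :
    (G n i).eval (-1) = (-1)^i ∧ (G n (i+1)).eval (-1) = (-1)^(i+1) := by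
  induction i with
  | zero => simp [G_zero, G_one]
  | succ i ih =>
    refine ⟨ih.2, ?_⟩
    have := congrArg (eval (-1)) (G_rec n i hn)
    simp [ih.1, ih.2] at this
    have h2 := ga_pos n (i+1) hn
    have : ga n (i+1) * (eval (-1) (G n (i+2)) - (-1)^(i+2)) = 0 := by
      unfold ga at *; linear_combination -this
    rcases mul_eq_zero.1 this with h | h
    · exact absurd h h2.ne'
    · linear_combination h

theorem G_deg (n : ℕ) (hn : 2 ≤ n) (i : ℕ) :
    ((G n i).natDegree ≤ i ∧ 0 < (G n i).coeff i) ∧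
    ((G n (i+1)).natDegree ≤ i+1 ∧ 0 < (G n (i+1)).coeff (i+1)) := by
  induction i with
  | zero => simp [G_zero, G_one]
  | succ i ih =>
    refine ⟨ih.2, ?_, ?_⟩
    · rw [G]
      refine (natDegree_C_mul_le _ _).trans ?_
      refine (natDegree_sub_le _ _).trans (max_le ?_ ?_)
      · refine natDegree_mul_le.trans ?_
        have := ih.2.1
        simp; omega
      · refine (natDegree_C_mul_le _ _).trans ?_
        have := ih.1.1
        omega
    · rw [G]
      have : (G n i).coeff (i+2) = 0 := coeff_eq_zero_of_natDegree_lt (by have := ih.1.1; omega)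
      simp [this]
      exact mul_pos (inv_pos.2 (ga_pos n _ hn)) ih.2.2

theorem G_AB (n : ℕ) (hn : 2 ≤ n) (i : ℕ) :
    (1 - X^2) * derivative (G n (i+1)) = ((i:ℝ[X])+1) * (G n i - X * G n (i+1)) ∧
    (1 - X^2) * derivative (G n i) = ((i:ℝ[X]) + (n:ℝ[X]) - 2) * (X * G n i - G n (i+1)) := by
  induction i with
  | zero => simp [G_zero, G_one, sq]
  | succ i ih =>
    have hr := G_rec' n i hn
    have hB : (1 - X^2) * derivative (G n (i+1)) =
        (((i+1:ℕ):ℝ[X]) + (n:ℝ[X]) - 2) * (X * G n (i+1) - G n (i+1+1)) := by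
      rw [ih.1]; push_cast
      linear_combination hr
    refine ⟨?_, hB⟩
    have hne : ((i:ℝ[X]) + (n:ℝ[X]) - 1) ≠ 0 := by
      obtain ⟨m, rfl⟩ : ∃ m, n = m + 2 := ⟨n - 2, by omega⟩
      have : ((i:ℝ[X]) + (m+2:ℕ) - 1) = ((i + m + 1 : ℕ) : ℝ[X]) := by push_cast; ring
      rw [this]; exact Nat.cast_ne_zero.2 (Nat.succ_ne_zero _)
    apply mul_left_cancel₀ hne
    have hr' := congrArg derivative hr
    simp only [derivative_mul, derivative_sub, derivative_add, derivative_X, derivative_natCast,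
      derivative_one, derivative_ofNat] at hr'
    have a1 := ih.1
    have b1 := ih.2
    push_cast
    linear_combination (1 - X^2) * hr' + (2 * (i:ℝ[X]) + (n:ℝ[X])) * X * a1 - ((i:ℝ[X])+1) * b1
      + ((i:ℝ[X])+2) * X * hr

theorem G_ode (n : ℕ) (hn : 2 ≤ n) (i : ℕ) :
    (1 - X^2) * derivative (derivative (G n i)) - ((n:ℝ[X]) - 1) * X * derivative (G n i)
      = - ((i:ℝ[X]) * ((i:ℝ[X]) + (n:ℝ[X]) - 2)) * G n i := by
  cases i with
  | zero => simp [G_zero]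
  | succ i =>
    have hne : (1 - X^2 : ℝ[X]) ≠ 0 := by
      intro h
      have := congrArg (eval 0) h
      simp at this
    apply mul_left_cancel₀ hne
    have a1 := (G_AB n hn i).1
    have b1 := (G_AB n hn i).2
    have h := congrArg derivative a1
    simp only [derivative_mul, derivative_sub, derivative_add, derivative_X, derivative_natCast,
      derivative_one, derivative_X_sq] at h
    simp only [map_ofNat] at h
    push_cast
    linear_combination (1 - X^2) * h + ((i:ℝ[X])+1) * b1 + (-((n:ℝ[X]) - 3) * X - ((i:ℝ[X])+1) * X) * a1

theorem I_sym (n : ℕ) (hn : 2 ≤ n) (p q : ℝ[X]) :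
    gI n hn (q * ((1 - X^2) * derivative (derivative p) - ((n:ℝ[X]) - 1) * X * derivative p))
     = - gI n hn ((1 - X^2) * (derivative p * derivative q)) := by
  have h := gI_pearson n hn (derivative p * q)
  rw [← smul_eq_mul (a := (n:ℝ) - 1), ← map_smul (gI n hn)] at h
  rw [← map_neg, ← sub_eq_zero, ← map_sub]
  rw [← sub_eq_zero, ← map_sub] at h
  rw [← h]
  congr 1
  rw [derivative_mul, smul_eq_C_mul, C_sub, C_1, C_eq_natCast]
  ring

theorem G_orth (n : ℕ) (hn : 2 ≤ n) (i j : ℕ) (hij : i ≠ j) : gI n hn (G n i * G n j) = 0 := by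
  have hn' : (2:ℝ) ≤ n := by exact_mod_cast hn
  have h1 := I_sym n hn (G n i) (G n j)
  have h2 := I_sym n hn (G n j) (G n i)
  rw [G_ode n hn] at h1 h2
  rw [mul_comm (derivative (G n j)), ← h1] at h2
  have e1 : G n i * (-((j:ℝ[X]) * ((j:ℝ[X]) + (n:ℝ[X]) - 2)) * G n j) = (-((j:ℝ) * (j + n - 2))) • (G n i * G n j) := by
    rw [smul_eq_C_mul]; simp [map_ofNat]; ring
  have e2 : G n j * (-((i:ℝ[X]) * ((i:ℝ[X]) + (n:ℝ[X]) - 2)) * G n i) = (-((i:ℝ) * (i + n - 2))) • (G n i * G n j) := by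
    rw [smul_eq_C_mul]; simp [map_ofNat]; ring
  rw [e1, e2, map_smul, map_smul, smul_eq_mul, smul_eq_mul] at h2
  have h3 : ((i:ℝ) - j) * (i + j + n - 2) * gI n hn (G n i * G n j) = 0 := by linear_combination h2
  have hi : (0:ℝ) ≤ i := by positivity
  have hj : (0:ℝ) ≤ j := by positivity
  rcases mul_eq_zero.1 h3 with h | h
  · exfalso
    rcases mul_eq_zero.1 h with h | h
    · apply hij; have : (i:ℝ) = j := by linarith
      exact_mod_cast this
    · have h0 : (i:ℝ) = 0 := by linarith
      have h0' : (j:ℝ) = 0 := by linarith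
      apply hij; have : (i:ℝ) = j := by linarith
      exact_mod_cast this
  · exact h

theorem G_ne (n : ℕ) (hn : 2 ≤ n) (i : ℕ) : G n i ≠ 0 := by
  intro h
  have := (G_deg n hn i).1.2
  simp [h] at this

theorem I_sq_pos (n : ℕ) (hn : 2 ≤ n) (p : ℝ[X]) (hp : p ≠ 0) : 0 < gI n hn (p * p) := by
  apply gI_pos n hn _ (mul_ne_zero hp hp)
  intro t _; rw [eval_mul]; exact mul_self_nonneg _

theorem G_expand (n : ℕ) (hn : 2 ≤ n) (m : ℕ) (p : ℝ[X]) (hp : p.degree < m) :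
    ∃ c : ℕ → ℝ, p = ∑ l ∈ range m, C (c l) * G n l :=
  expand_fam (G n) (fun i => (G_deg n hn i).1.1) (fun i => (G_deg n hn i).1.2.ne') m p hp

theorem I_sum (n : ℕ) (hn : 2 ≤ n) (m : ℕ) (c : ℕ → ℝ) (j : ℕ) (hj : j < m) :
    gI n hn ((∑ l ∈ range m, C (c l) * G n l) * G n j) = c j * gI n hn (G n j * G n j) := by
  rw [Finset.sum_mul, map_sum]
  rw [Finset.sum_eq_single j]
  · rw [mul_assoc, ← smul_eq_C_mul, map_smul, smul_eq_mul]
  · intro b _ hb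
    rw [mul_assoc, ← smul_eq_C_mul, map_smul, G_orth n hn b j hb, smul_zero]
  · intro h; exact absurd (Finset.mem_range.2 hj) h

theorem P_eq_G (n : ℕ) (hn : 2 ≤ n) (P : ℕ → ℝ[X]) (hP : IsGegenbauer n P) (i : ℕ) : P i = G n i := by
  obtain ⟨h1, h2, h3⟩ := hP
  have hPne : ∀ i, P i ≠ 0 := fun i h => by have := h2 i; simp [h] at this
  have h3' : ∀ i j, i ≠ j → gI n hn (P i * P j) = 0 := by
    intro i j hij
    rw [gI_apply]; simp only [eval_mul]; exact h3 i j hij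
  have hdeg : (P i).degree < ((i+1:ℕ) : WithBot ℕ) := by
    rw [degree_eq_natDegree (hPne i), h1]; exact_mod_cast Nat.lt_succ_self i
  obtain ⟨c, hc⟩ := G_expand n hn (i+1) (P i) hdeg
  have hz : ∀ j < i, c j = 0 := by
    intro j hj
    have e := I_sum n hn (i+1) c j (by omega)
    rw [← hc] at e
    have hGd : (G n j).degree < ((j+1 : ℕ) : WithBot ℕ) := by
      rw [degree_eq_natDegree (G_ne n hn j)]
      exact_mod_cast Nat.lt_succ_of_le (G_deg n hn j).1.1
    obtain ⟨b, hb⟩ := expand_fam P (fun i => (h1 i).le) (fun i => by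
      have := h1 i
      have h4 : (P i).leadingCoeff ≠ 0 := leadingCoeff_ne_zero.2 (hPne i)
      rwa [leadingCoeff, this] at h4) (j+1) (G n j) hGd
    have e0 : gI n hn (P i * G n j) = 0 := by
      rw [hb, Finset.mul_sum, map_sum]
      apply Finset.sum_eq_zero
      intro l hl
      rw [mul_left_comm, ← smul_eq_C_mul, map_smul, h3' i l (by have := Finset.mem_range.1 hl; omega), smul_zero]
    rw [e0] at e
    rcases mul_eq_zero.1 e.symm with h | h
    · exact h
    · exact absurd h (I_sq_pos n hn _ (G_ne n hn j)).ne'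
  rw [Finset.sum_range_succ, Finset.sum_eq_zero (by
    intro l hl; rw [hz l (Finset.mem_range.1 hl)]; simp), zero_add] at hc
  have := h2 i
  rw [hc, eval_mul, eval_C, (G_eval_one n hn i).1, mul_one] at this
  rw [hc, this]; simp

noncomputable def dd (n i : ℕ) : ℝ := ((n + i - 1).choose (n - 1) : ℝ)

theorem dd_zero (n : ℕ) : dd n 0 = 1 := by simp [dd]

theorem dd_succ (n i : ℕ) (hn : 2 ≤ n) : dd n (i+1) * (i+1) = (n + i) * dd n i := by
  obtain ⟨m, rfl⟩ : ∃ m, n = m + 1 := ⟨n - 1, by omega⟩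
  have h := Nat.choose_mul_succ_eq (m + i) m
  have e : m + i + 1 - m = i + 1 := by omega
  rw [e] at h
  have h' : (((m+i).choose m : ℕ) : ℝ) * (m + i + 1) = ((m+i+1).choose m : ℕ) * (i+1) := by exact_mod_cast h
  unfold dd
  have e1 : m + 1 + (i + 1) - 1 = m + i + 1 := by omega
  have e2 : m + 1 + i - 1 = m + i := by omega
  have e3 : m + 1 - 1 = m := by omega
  rw [e1, e2, e3]
  push_cast
  linear_combination -h'

theorem dd_pos (n i : ℕ) : 0 < dd n i := by
  unfold dd
  exact_mod_cast Nat.choose_pos (by omega)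

noncomputable def rr (n : ℕ) : ℕ → ℝ
  | 0 => 1
  | (i+1) => dd n i * (2 * i + n) * (n - 1) / ((i + 1) * (n + i - 1))

theorem rr_zero (n : ℕ) : rr n 0 = 1 := by rw [rr]
theorem rr_one (n : ℕ) (hn : 2 ≤ n) : rr n 1 = dd n 1 := by
  have hn' : (2:ℝ) ≤ n := by exact_mod_cast hn
  have h := dd_succ n 0 hn
  rw [rr, dd_zero]
  rw [dd_zero] at h
  simp at h ⊢
  rw [h, mul_div_cancel_right₀]; linarith

theorem rr_pos (n i : ℕ) (hn : 2 ≤ n) : 0 < rr n i := by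
  have hn' : (2:ℝ) ≤ n := by exact_mod_cast hn
  cases i with
  | zero => rw [rr]; norm_num
  | succ i =>
    rw [rr]
    have hi : (0:ℝ) ≤ i := by positivity
    have := dd_pos n i
    apply div_pos
    · apply mul_pos (mul_pos this (by linarith)) (by linarith)
    · apply mul_pos <;> linarith

theorem rr_two (n i : ℕ) (hn : 2 ≤ n) : rr n (i+2) = dd n (i+2) - dd n i := by
  have hn' : (2:ℝ) ≤ n := by exact_mod_cast hn
  have hi : (0:ℝ) ≤ i := by positivity
  have h1 := dd_succ n i hn
  have h2 := dd_succ n (i+1) hn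
  rw [rr]
  push_cast at h2 ⊢
  have e1 : dd n (i+1) = (n+i) * dd n i / (i+1) := by rw [eq_div_iff (by linarith)]; exact h1
  have e2 : dd n (i+2) = (n+(i+1)) * dd n (i+1) / (i+1+1) := by rw [eq_div_iff (by linarith)]; exact h2
  rw [e2, e1]
  have a1 : (i:ℝ)+1 ≠ 0 := by linarith
  have a2 : (i:ℝ)+1+1 ≠ 0 := by linarith
  have a3 : (n:ℝ)+(i+1)-1 ≠ 0 := by linarith
  rw [div_eq_iff (mul_ne_zero a2 a3)]
  field_simp
  ring

theorem rr_rec (n i : ℕ) (hn : 2 ≤ n) : al n (i+1) * rr n (i+1) = ga n i * rr n i := by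
  have hn' : (2:ℝ) ≤ n := by exact_mod_cast hn
  have hi : (0:ℝ) ≤ i := by positivity
  cases i with
  | zero =>
    rw [ga, al_zero, rr_zero, rr, al, dd_zero]
    simp
    have : (n:ℝ) - 1 ≠ 0 := by linarith
    have : (n:ℝ) ≠ 0 := by linarith
    field_simp
  | succ i =>
    have hi : (0:ℝ) ≤ i := by positivity
    have h1 := dd_succ n i hn
    have e1 : dd n (i+1) = (n+i) * dd n i / (i+1) := by rw [eq_div_iff (by linarith)]; exact h1
    rw [rr, rr, ga, al, al, e1]
    push_cast
    have a1 : (i:ℝ)+1 ≠ 0 := by linarith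
    have a2 : (i:ℝ)+1+1 ≠ 0 := by linarith
    have a3 : (n:ℝ)+(i+1)-1 ≠ 0 := by linarith
    have a3' : (n:ℝ)+i-1 ≠ 0 := by linarith
    have a4 : 2 * ((i:ℝ)+1+1)+n-2 ≠ 0 := by linarith
    have a5 : 2 * ((i:ℝ)+1)+n-2 ≠ 0 := by linarith
    have a6 : (n:ℝ)+i ≠ 0 := by linarith
    rw [one_sub_div a5, div_mul_div_comm, div_mul_div_comm, div_eq_div_iff (by positivity) (by positivity)]
    field_simp
    ring

theorem I_xG (n : ℕ) (hn : 2 ≤ n) (i : ℕ) :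
    ga n i * gI n hn (G n (i+1) * G n (i+1)) = al n (i+1) * gI n hn (G n i * G n i) := by
  have h1 : gI n hn (X * G n (i+1) * G n i) = al n (i+1) * gI n hn (G n i * G n i) := by
    rw [G_rec n i hn, add_mul, map_add, mul_assoc, ← smul_eq_C_mul, map_smul, G_orth n hn (i+2) i (by omega),
      mul_assoc, ← smul_eq_C_mul, map_smul]; simp
  have h2 : gI n hn (X * G n (i+1) * G n i) = ga n i * gI n hn (G n (i+1) * G n (i+1)) := by
    rw [mul_right_comm]
    cases i with
    | zero => rw [ga, al_zero, G_one, G_zero]; simp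
    | succ i =>
      rw [G_rec n i hn, add_mul, map_add, mul_assoc, ← smul_eq_C_mul, map_smul, mul_assoc, ← smul_eq_C_mul,
        map_smul, G_orth n hn i (i+1+1) (by omega)]; simp
  rw [← h1, h2]

theorem rr_norm (n : ℕ) (hn : 2 ≤ n) (i : ℕ) : rr n i * gI n hn (G n i * G n i) = 1 := by
  induction i with
  | zero => rw [rr_zero, G_zero]; simp [gI_one]
  | succ i ih =>
    have h1 := I_xG n hn i
    have h2 := rr_rec n i hn
    have h3 := ga_pos n i hn
    have : ga n i * (rr n (i+1) * gI n hn (G n (i+1) * G n (i+1)) - 1) = 0 := by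
      linear_combination (rr n (i+1)) * h1 + gI n hn (G n i * G n i) * h2 + ga n i * ih
    rcases mul_eq_zero.1 this with h | h
    · exact absurd h h3.ne'
    · linarith

/-- positive definite polynomials -/
def PD (n : ℕ) (hn : 2 ≤ n) (p : ℝ[X]) : Prop := ∀ l, 0 ≤ gI n hn (p * G n l)

theorem PD.add {n : ℕ} {hn : 2 ≤ n} {p q : ℝ[X]} (hp : PD n hn p) (hq : PD n hn q) : PD n hn (p + q) := by
  intro l; rw [add_mul, map_add]; exact add_nonneg (hp l) (hq l)
theorem PD.smul {n : ℕ} {hn : 2 ≤ n} {p : ℝ[X]} {c : ℝ} (hc : 0 ≤ c) (hp : PD n hn p) : PD n hn (c • p) := by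
  intro l; rw [smul_mul_assoc, map_smul]; exact mul_nonneg hc (hp l)
theorem PD.zero {n : ℕ} {hn : 2 ≤ n} : PD n hn 0 := by intro l; simp
theorem PD.sum {n : ℕ} {hn : 2 ≤ n} {ι : Type*} (s : Finset ι) (f : ι → ℝ[X]) (h : ∀ i ∈ s, PD n hn (f i)) :
    PD n hn (∑ i ∈ s, f i) := by
  intro l; rw [Finset.sum_mul, map_sum]; exact Finset.sum_nonneg (fun i hi => h i hi l)
theorem PD_G (n : ℕ) (hn : 2 ≤ n) (i : ℕ) : PD n hn (G n i) := by
  intro l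
  by_cases h : i = l
  · subst h; exact (I_sq_pos n hn _ (G_ne n hn i)).le
  · rw [G_orth n hn i l h]

/-- weighted polynomials -/
noncomputable def gg (n i : ℕ) : ℝ[X] := C (rr n i) * G n i

theorem gg_rec (n i : ℕ) (hn : 2 ≤ n) :
    X * gg n (i+1) = C (al n (i+2)) * gg n (i+2) + C (ga n i) * gg n i := by
  have h1 := G_rec n i hn
  have h2 := congrArg C (rr_rec n (i+1) hn)
  have h3 := congrArg C (rr_rec n i hn)
  simp only [C_mul] at h2 h3
  unfold gg
  linear_combination C (rr n (i+1)) * h1 - G n (i+2) * h2 + G n i * h3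

theorem gg_rec0 (n : ℕ) (hn : 2 ≤ n) : X * gg n 0 = C (al n 1) * gg n 1 := by
  have h3 := congrArg C (rr_rec n 0 hn)
  rw [ga, al_zero] at h3
  unfold gg
  rw [G_zero, G_one]
  simp only [C_mul, sub_zero, C_1] at h3
  linear_combination -X * h3

theorem szwarc (n : ℕ) (hn : 2 ≤ n) (J : ℕ) : ∀ e : ℕ,
    (C (al n J) * (gg n (e+J) * gg n J) =
      ∑ y ∈ range J, C (al n (e+2*J-y) - al n y) * (gg n (e+2*J-y) * gg n y)
      + ∑ y ∈ range J, C (ga n (e+y) - al n y) * (gg n (e+y) * gg n y)) ∧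
    (C (al n (J+1)) * (gg n (e+(J+1)) * gg n (J+1)) =
      ∑ y ∈ range (J+1), C (al n (e+2*(J+1)-y) - al n y) * (gg n (e+2*(J+1)-y) * gg n y)
      + ∑ y ∈ range (J+1), C (ga n (e+y) - al n y) * (gg n (e+y) * gg n y)) := by
  induction J with
  | zero =>
    intro e
    refine ⟨by simp [al_zero], ?_⟩
    have h1 := gg_rec n e hn
    have h0 := gg_rec0 n hn
    simp only [zero_add, Finset.sum_range_one, al_zero, sub_zero, add_zero, mul_one]
    linear_combination gg n 0 * h1 - gg n (e+1) * h0
  | succ J ih =>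
    intro e
    refine ⟨(ih e).2, ?_⟩
    have c1 := (ih (e+2)).2
    have c2 := (ih e).2
    have c3 := (ih (e+2)).1
    have h1 := gg_rec n (e+J+1) hn
    have h0 := gg_rec n J hn
    rw [Finset.sum_range_succ _ (J+1), Finset.sum_range_succ _ (J+1)]
    rw [Finset.sum_range_succ (fun y => C (ga n (e+2+y) - al n y) * (gg n (e+2+y) * gg n y)) J] at c1
    rw [Finset.sum_range_succ (fun y => C (al n (e+2*(J+1)-y) - al n y) * (gg n (e+2*(J+1)-y) * gg n y)) J] at c2
    have i1 : e + 2 * (J+1+1) = e + 2 * J + 4 := by ring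
    have i2 : e + 2 + 2 * (J+1) = e + 2 * J + 4 := by ring
    have i3 : e + 2 * (J+1) = e + 2 * J + 2 := by ring
    have i4 : e + 2 + 2 * J = e + 2 * J + 2 := by ring
    have i5 : e + 2 * J + 4 - (J + 1) = e + J + 3 := by omega
    have i6 : e + 2 * J + 2 - J = e + J + 2 := by omega
    have i7 : e + (J+1+1) = e + J + 2 := by omega
    have i8 : e + 2 + (J+1) = e + J + 3 := by omega
    have i9 : e + 2 + J = e + J + 2 := by omega
    have i10 : e + (J + 1) = e + J + 1 := by omega
    have i11 : J + 1 + 1 = J + 2 := by omega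
    have i12 : e + J + 1 + 2 = e + J + 3 := by omega
    have i13 : e + J + 1 + 1 = e + J + 2 := by omega
    simp only [i1, i2, i3, i4, i5, i6, i7, i8, i9, i10, i11, i12, i13] at *
    simp only [ga, C_sub, C_1] at *
    linear_combination gg n (J+1) * h1 - gg n (e+J+2) * h0 + c1 + c2 - c3

theorem PD_gg (n : ℕ) (hn : 2 ≤ n) (J : ℕ) : ∀ e, PD n hn (gg n (e+J) * gg n J) := by
  induction J using Nat.strong_induction_on with
  | _ J ih =>
    intro e
    rcases Nat.eq_zero_or_pos J with h | h
    · subst h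
      unfold gg
      rw [G_zero, rr_zero, C_1, mul_one, mul_one, ← smul_eq_C_mul]
      exact PD.smul (rr_pos n _ hn).le (PD_G n hn _)
    · obtain ⟨J', rfl⟩ : ∃ J', J = J' + 1 := ⟨J - 1, by omega⟩
      have hs := (szwarc n hn (J'+1) e).1
      have hpd : PD n hn (C (al n (J'+1)) * (gg n (e+(J'+1)) * gg n (J'+1))) := by
        rw [hs]
        apply PD.add
        · apply PD.sum
          intro y hy
          have hy := Finset.mem_range.1 hy
          rw [← smul_eq_C_mul]
          apply PD.smul
          · have := al_mono n hn (show y ≤ e + 2 * (J'+1) - y by omega)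
            linarith
          · have := ih y hy (e + 2 * (J'+1) - y - y)
            rwa [show e + 2 * (J'+1) - y - y + y = e + 2 * (J'+1) - y by omega] at this
        · apply PD.sum
          intro y hy
          have hy := Finset.mem_range.1 hy
          rw [← smul_eq_C_mul]
          apply PD.smul
          · have h1 := al_le_half n y hn
            have h2 := al_le_half n (e+y) hn
            unfold ga; linarith
          · exact ih y hy e
      have ha := al_pos n J' hn
      have := PD.smul (inv_pos.2 ha).le hpd
      rwa [smul_eq_C_mul, ← mul_assoc, ← C_mul, inv_mul_cancel₀ ha.ne', C_1, one_mul] at this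

theorem PD_GG (n : ℕ) (hn : 2 ≤ n) (i j : ℕ) : PD n hn (G n i * G n j) := by
  have key : ∀ e J, PD n hn (G n (e+J) * G n J) := by
    intro e J
    have h := PD.smul (inv_pos.2 (mul_pos (rr_pos n (e+J) hn) (rr_pos n J hn))).le (PD_gg n hn J e)
    have : (rr n (e+J) * rr n J)⁻¹ • (gg n (e+J) * gg n J) = G n (e+J) * G n J := by
      unfold gg
      rw [smul_eq_C_mul]
      have : C ((rr n (e+J) * rr n J)⁻¹) * (C (rr n (e+J)) * C (rr n J)) = 1 := by
        rw [← C_mul, ← C_mul, inv_mul_cancel₀ (mul_pos (rr_pos n (e+J) hn) (rr_pos n J hn)).ne', C_1]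
      linear_combination (G n (e+J) * G n J) * this
    rwa [this] at h
  rcases le_total j i with h | h
  · have := key (i - j) j
    rwa [Nat.sub_add_cancel h] at this
  · have := key (j - i) i
    rw [Nat.sub_add_cancel h] at this
    rwa [mul_comm]

theorem PD_exists (n : ℕ) (hn : 2 ≤ n) (p : ℝ[X]) (hp : PD n hn p) :
    ∃ (m : ℕ) (c : ℕ → ℝ), (∀ l < m, 0 ≤ c l) ∧ p = ∑ l ∈ range m, C (c l) * G n l := by
  obtain ⟨c, hc⟩ := G_expand n hn (p.natDegree + 1) p (by
    refine lt_of_le_of_lt degree_le_natDegree ?_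
    exact_mod_cast Nat.lt_succ_self _)
  refine ⟨_, c, ?_, hc⟩
  intro l hl
  have h := hp l
  rw [hc, I_sum n hn _ c l hl] at h
  exact nonneg_of_mul_nonneg_left h (I_sq_pos n hn _ (G_ne n hn l))

theorem PD.mul {n : ℕ} {hn : 2 ≤ n} {p q : ℝ[X]} (hp : PD n hn p) (hq : PD n hn q) : PD n hn (p * q) := by
  obtain ⟨m, c, hc, rfl⟩ := PD_exists n hn p hp
  obtain ⟨m', c', hc', rfl⟩ := PD_exists n hn q hq
  rw [Finset.sum_mul]
  apply PD.sum
  intro i hi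
  rw [Finset.mul_sum]
  apply PD.sum
  intro j hj
  have : C (c i) * G n i * (C (c' j) * G n j) = (c i * c' j) • (G n i * G n j) := by
    rw [smul_eq_C_mul, C_mul]; ring
  rw [this]
  exact PD.smul (mul_nonneg (hc i (Finset.mem_range.1 hi)) (hc' j (Finset.mem_range.1 hj))) (PD_GG n hn i j)

theorem I_G_of_deg (n : ℕ) (hn : 2 ≤ n) (m : ℕ) (p : ℝ[X]) (hp : p.degree < m) (l : ℕ) (hl : m ≤ l) :
    gI n hn (p * G n l) = 0 := by
  obtain ⟨c, rfl⟩ := G_expand n hn m p hp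
  rw [Finset.sum_mul, map_sum]
  apply Finset.sum_eq_zero
  intro i hi
  rw [mul_assoc, ← smul_eq_C_mul, map_smul, G_orth n hn i l (by have := Finset.mem_range.1 hi; omega), smul_zero]

/-- parity kernels -/
noncomputable def W (n m : ℕ) : ℝ[X] := ∑ l ∈ range (m+1), C (rr n l * ((1 + (-1)^(m+l))/2)) * G n l

theorem half_par_nonneg (a : ℕ) : (0:ℝ) ≤ (1 + (-1)^a)/2 := by
  rcases neg_one_pow_eq_or ℝ a with h | h <;> rw [h] <;> norm_num

theorem PD_W (n : ℕ) (hn : 2 ≤ n) (m : ℕ) : PD n hn (W n m) := by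
  apply PD.sum
  intro l _
  rw [← smul_eq_C_mul]
  exact PD.smul (mul_nonneg (rr_pos n l hn).le (half_par_nonneg _)) (PD_G n hn l)

theorem I_W (n : ℕ) (hn : 2 ≤ n) (m : ℕ) (g : ℝ[X]) (hg : g.degree < (m + 2 : ℕ)) :
    gI n hn (W n m * g) = (g.eval 1 + (-1)^m * g.eval (-1)) / 2 := by
  obtain ⟨c, rfl⟩ := G_expand n hn (m+2) g hg
  rw [Finset.mul_sum, map_sum]
  simp only [eval_finsetSum, eval_mul, eval_C, (G_eval_one n hn _).1, (G_eval_neg_one n hn _).1]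
  rw [Finset.mul_sum, ← Finset.sum_add_distrib, Finset.sum_div]
  apply Finset.sum_congr rfl
  intro j hj
  have hj := Finset.mem_range.1 hj
  rw [mul_left_comm, ← smul_eq_C_mul, map_smul, smul_eq_mul]
  have : gI n hn (W n m * G n j) = (1 + (-1)^(m+j))/2 := by
    rcases Nat.lt_or_ge j (m+1) with h | h
    · unfold W
      rw [I_sum n hn _ _ j h]
      linear_combination ((1 + (-1)^(m+j))/2) * rr_norm n hn j
    · have : j = m + 1 := by omega
      subst this
      rw [I_G_of_deg n hn (m+1) (W n m) _ (m+1) le_rfl]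
      · rw [show m + (m+1) = 2 * m + 1 by ring, pow_succ, pow_mul]; norm_num
      · unfold W
        refine lt_of_le_of_lt (degree_sum_le _ _) ?_
        rw [Finset.sup_lt_iff (by exact_mod_cast WithBot.bot_lt_coe _)]
        intro l hl
        refine lt_of_le_of_lt degree_le_natDegree ?_
        refine lt_of_le_of_lt (b := (l : WithBot ℕ)) ?_ ?_
        · exact_mod_cast (natDegree_C_mul_le _ _).trans (G_deg n hn l).1.1
        · exact_mod_cast Finset.mem_range.1 hl
  rw [this, pow_add]; ring

theorem W_succ_succ (n m : ℕ) : W n (m+2) = C (rr n (m+2)) * G n (m+2) + W n m := by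
  unfold W
  rw [Finset.sum_range_succ, Finset.sum_range_succ (n := m + 1)]
  have e1 : (-1:ℝ)^(m+2+(m+1)) = -1 := by
    rw [show m+2+(m+1) = 2 * (m+1) + 1 by ring, pow_succ, pow_mul]; norm_num
  have e2 : (-1:ℝ)^(m+2+(m+2)) = 1 := by
    rw [show m+2+(m+2) = 2 * (m+2) by ring, pow_mul]; norm_num
  rw [show m+1+1 = m+2 by ring, e1, e2]
  have : ∀ l, (-1:ℝ)^(m+2+l) = (-1)^(m+l) := by
    intro l; rw [show m+2+l = m+l+2 by ring, pow_add]; norm_num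
  simp only [this]
  norm_num
  ring

theorem W_zero (n : ℕ) : W n 0 = G n 0 := by
  simp [W, rr_zero]
theorem W_one (n : ℕ) : W n 1 = C (rr n 1) * G n 1 := by
  simp [W, Finset.sum_range_succ]

theorem W_eval_one (n : ℕ) (hn : 2 ≤ n) (m : ℕ) : (W n m).eval 1 = dd n m ∧ (W n (m+1)).eval 1 = dd n (m+1) := by
  induction m with
  | zero => simp [W_zero, W_one, G_zero, dd_zero, G_one, rr_one n hn]
  | succ m ih =>
    refine ⟨ih.2, ?_⟩
    rw [W_succ_succ, eval_add, ih.1, eval_mul, eval_C, (G_eval_one n hn _).1, rr_two n m hn]; ring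

theorem W_eval_neg_one (n : ℕ) (hn : 2 ≤ n) (m : ℕ) : (W n m).eval (-1) = (-1)^m * dd n m := by
  rw [← (W_eval_one n hn m).1]
  unfold W
  simp only [eval_finsetSum, eval_mul, eval_C, (G_eval_one n hn _).1, (G_eval_neg_one n hn _).1]
  rw [Finset.mul_sum]
  apply Finset.sum_congr rfl
  intro l _
  rw [pow_add]
  rcases neg_one_pow_eq_or ℝ m with h | h <;> rcases neg_one_pow_eq_or ℝ l with h' | h' <;> rw [h, h'] <;> ring

theorem W_deg (n : ℕ) (hn : 2 ≤ n) (m : ℕ) : (W n m).natDegree ≤ m ∧ 0 < (W n m).coeff m := by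
  constructor
  · unfold W
    apply natDegree_sum_le_of_forall_le
    intro l hl
    have := Finset.mem_range.1 hl
    exact (natDegree_C_mul_le _ _).trans ((G_deg n hn l).1.1.trans (by omega))
  · unfold W
    rw [Finset.sum_range_succ, coeff_add, finsetSum_coeff, Finset.sum_eq_zero, zero_add, coeff_C_mul]
    · have e2 : (-1:ℝ)^(m+m) = 1 := by
        rw [show m+m = 2 * m by ring, pow_mul]; norm_num
      rw [e2]
      have := rr_pos n m hn
      have h2 := (G_deg n hn m).1.2
      norm_num; positivity
    · intro l hl
      have := Finset.mem_range.1 hl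
      apply coeff_eq_zero_of_natDegree_lt
      exact lt_of_le_of_lt ((natDegree_C_mul_le _ _).trans (G_deg n hn l).1.1) this

theorem I_WW (n : ℕ) (hn : 2 ≤ n) (m : ℕ) : gI n hn (W n m * W n m) = dd n m := by
  rw [I_W n hn m _ (by
    refine lt_of_le_of_lt degree_le_natDegree ?_
    have := (W_deg n hn m).1
    exact_mod_cast (by omega : (W n m).natDegree < m + 2)), (W_eval_one n hn m).1, W_eval_neg_one n hn m]
  rcases neg_one_pow_eq_or ℝ m with h | h <;> rw [h] <;> ring

theorem I_XWW (n : ℕ) (hn : 2 ≤ n) (m : ℕ) : gI n hn (W n m * (X * W n m)) = 0 := by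
  rw [I_W n hn m _ (by
    refine lt_of_le_of_lt degree_le_natDegree ?_
    have := (W_deg n hn m).1
    have h2 : (X * W n m).natDegree ≤ 1 + (W n m).natDegree := natDegree_mul_le.trans (by simp)
    exact_mod_cast (by omega : (X * W n m).natDegree < m + 2))]
  rw [eval_mul, eval_mul, (W_eval_one n hn m).1, W_eval_neg_one n hn m]
  rcases neg_one_pow_eq_or ℝ m with h | h <;> rw [h] <;> simp

theorem mono_of_deriv (f f' : ℝ → ℝ) (S : Set ℝ) (hS : Convex ℝ S)
    (h : ∀ x ∈ S, HasDerivWithinAt f (f' x) S x) (h0 : ∀ x ∈ S, 0 ≤ f' x) : MonotoneOn f S := by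
  apply monotoneOn_of_hasDerivWithinAt_nonneg (f' := f') hS
  · intro x hx; exact (h x hx).continuousWithinAt
  · intro x hx; exact (h x (interior_subset hx)).mono interior_subset
  · intro x hx; exact h0 x (interior_subset hx)

noncomputable def tayT (D : ℕ → ℝ → ℝ) (s M : ℕ) (x : ℝ) : ℝ :=
  ∑ j ∈ range M, D (s+j) (-1) / (j.factorial : ℝ) * (x+1)^j

noncomputable def tayR (D : ℕ → ℝ → ℝ) (s M : ℕ) (x : ℝ) : ℝ := D s x - tayT D s M x

theorem tayT_deriv (D : ℕ → ℝ → ℝ) (s M : ℕ) (x : ℝ) :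
    HasDerivAt (tayT D s M) (tayT D (s+1) (M-1) x) x := by
  cases M with
  | zero =>
    have : tayT D s 0 = fun _ => 0 := by funext x; simp [tayT]
    rw [this]; simp only [tayT, zero_le, Nat.sub_eq_zero_of_le, Finset.range_zero, Finset.sum_empty]
    exact hasDerivAt_const _ _
  | succ M =>
    have h : ∀ j ∈ range (M+1), HasDerivAt (fun x : ℝ => D (s+j) (-1) / (j.factorial : ℝ) * (x+1)^j)
        (D (s+j) (-1) / (j.factorial : ℝ) * (j * (x+1)^(j-1))) x := by
      intro j _
      have := (((hasDerivAt_id x).add_const (1:ℝ)).pow j).const_mul (D (s+j) (-1) / (j.factorial : ℝ))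
      simpa using this
    have h2 := HasDerivAt.fun_sum h
    refine HasDerivAt.congr_deriv h2 ?_
    rw [Finset.sum_range_succ']
    simp only [tayT, Nat.add_sub_cancel]
    simp
    apply Finset.sum_congr rfl
    intro j _
    rw [show s + (j+1) = s + 1 + j by ring, Nat.factorial_succ]
    have : (j.factorial:ℝ) ≠ 0 := by positivity
    have : (j:ℝ)+1 ≠ 0 := by positivity
    push_cast
    field_simp

section
variable (D : ℕ → ℝ → ℝ)
  (hD : ∀ m, ∀ x ∈ Set.Ico (-1:ℝ) 1, HasDerivWithinAt (D m) (D (m+1) x) (Set.Ico (-1:ℝ) 1) x)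
  (hD0 : ∀ m, ∀ x ∈ Set.Ico (-1:ℝ) 1, 0 ≤ D m x)

theorem neg_one_mem_S : (-1:ℝ) ∈ Set.Ico (-1:ℝ) 1 := by norm_num

theorem tayR_deriv (hD : ∀ m, ∀ x ∈ Set.Ico (-1:ℝ) 1, HasDerivWithinAt (D m) (D (m+1) x) (Set.Ico (-1:ℝ) 1) x)
    (s M : ℕ) (x : ℝ) (hx : x ∈ Set.Ico (-1:ℝ) 1) :
    HasDerivWithinAt (tayR D s M) (tayR D (s+1) (M-1) x) (Set.Ico (-1:ℝ) 1) x :=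
  (hD s x hx).sub (tayT_deriv D s M x).hasDerivWithinAt

theorem tayR_neg_one (s M : ℕ) : tayR D s (M+1) (-1) = 0 := by
  simp [tayR, tayT, Finset.sum_range_succ']

theorem tayR_nonneg (hD : ∀ m, ∀ x ∈ Set.Ico (-1:ℝ) 1, HasDerivWithinAt (D m) (D (m+1) x) (Set.Ico (-1:ℝ) 1) x)
    (hD0 : ∀ m, ∀ x ∈ Set.Ico (-1:ℝ) 1, 0 ≤ D m x)
    (M : ℕ) : ∀ s, ∀ x ∈ Set.Ico (-1:ℝ) 1, 0 ≤ tayR D s M x := by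
  induction M with
  | zero => intro s x hx; simpa [tayR, tayT] using hD0 s x hx
  | succ M ih =>
    intro s x hx
    have := mono_of_deriv _ _ _ (convex_Ico _ _) (tayR_deriv D hD s (M+1)) (ih (s+1)) neg_one_mem_S hx hx.1
    rwa [tayR_neg_one] at this

theorem tayR_E (hD : ∀ m, ∀ x ∈ Set.Ico (-1:ℝ) 1, HasDerivWithinAt (D m) (D (m+1) x) (Set.Ico (-1:ℝ) 1) x)
    (hD0 : ∀ m, ∀ x ∈ Set.Ico (-1:ℝ) 1, 0 ≤ D m x)
    (M : ℕ) : ∀ s, ∀ x ∈ Set.Ico (-1:ℝ) 1, 0 ≤ (x+1) * tayR D (s+1) (M-1) x - M * tayR D s M x := by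
  induction M with
  | zero =>
    intro s x hx
    have := mul_nonneg (show 0 ≤ x + 1 by linarith [hx.1]) (tayR_nonneg D hD hD0 0 (s+1) x hx)
    simpa using this
  | succ M ih =>
    intro s x hx
    have hd : ∀ x ∈ Set.Ico (-1:ℝ) 1, HasDerivWithinAt
        (fun x => (x+1) * tayR D (s+1) M x - ((M+1:ℕ):ℝ) * tayR D s (M+1) x)
        ((x+1) * tayR D (s+1+1) (M-1) x - M * tayR D (s+1) M x) (Set.Ico (-1:ℝ) 1) x := by
      intro x hx
      have h1 := ((hasDerivAt_id x).add_const (1:ℝ)).hasDerivWithinAt (s := Set.Ico (-1:ℝ) 1)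
      have h2 := (h1.mul (tayR_deriv D hD (s+1) M x hx)).sub
        ((tayR_deriv D hD s (M+1) x hx).const_mul ((M+1:ℕ):ℝ))
      refine HasDerivWithinAt.congr_deriv h2 ?_
      simp
      ring
    have := mono_of_deriv _ _ _ (convex_Ico _ _) hd (ih (s+1)) neg_one_mem_S hx hx.1
    simpa [tayR_neg_one] using this

theorem tayR_ratio (hD : ∀ m, ∀ x ∈ Set.Ico (-1:ℝ) 1, HasDerivWithinAt (D m) (D (m+1) x) (Set.Ico (-1:ℝ) 1) x)
    (hD0 : ∀ m, ∀ x ∈ Set.Ico (-1:ℝ) 1, 0 ≤ D m x) (s M : ℕ) (x b : ℝ) (hx : -1 < x) (hxb : x ≤ b) (hb : b < 1) :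
    tayR D s M x / (x+1)^M ≤ tayR D s M b / (b+1)^M := by
  have hd : ∀ x ∈ Set.Ioo (-1:ℝ) 1, HasDerivWithinAt (fun x => tayR D s M x / (x+1)^M)
      (((x+1) * tayR D (s+1) (M-1) x - M * tayR D s M x) / (x+1)^(M+1)) (Set.Ioo (-1:ℝ) 1) x := by
    intro x hx
    have hx1 : x + 1 ≠ 0 := by linarith [hx.1]
    have h1 := (((hasDerivAt_id x).add_const (1:ℝ)).pow M).hasDerivWithinAt (s := Set.Ioo (-1:ℝ) 1)
    have h2 := ((tayR_deriv D hD s M x (Set.Ioo_subset_Ico_self hx)).mono Set.Ioo_subset_Ico_self).div h1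
      (pow_ne_zero _ hx1)
    refine HasDerivWithinAt.congr_deriv h2 ?_
    cases M with
    | zero => simp; field_simp
    | succ M =>
      simp
      field_simp
      ring
  refine mono_of_deriv _ _ _ (convex_Ioo _ _) hd ?_ ⟨hx, by linarith⟩ ⟨by linarith, hb⟩ hxb
  intro x hx
  apply div_nonneg (tayR_E D hD hD0 M s x (Set.Ioo_subset_Ico_self hx))
  have : 0 < x + 1 := by linarith [hx.1]
  positivity
end

/-- functions on `[-1,1)` given by a nonnegative power series around `-1` -/
def PS (h : ℝ → ℝ) : Prop :=
  ∃ c : ℕ → ℝ, (∀ j, 0 ≤ c j) ∧ ∀ t ∈ Set.Ico (-1:ℝ) 1, HasSum (fun j => c j * (t+1)^j) (h t)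

theorem PS_of_AbsMonOn (h : ℝ → ℝ) (hh : AbsMonOn h) : PS h := by
  set D : ℕ → ℝ → ℝ := fun m => iteratedDerivWithin m h (Set.Ico (-1:ℝ) 1) with hDdef
  have huniq : UniqueDiffOn ℝ (Set.Ico (-1:ℝ) 1) := uniqueDiffOn_Ico _ _
  have hD0 : ∀ m, ∀ x ∈ Set.Ico (-1:ℝ) 1, 0 ≤ D m x := hh.2
  have hD : ∀ m, ∀ x ∈ Set.Ico (-1:ℝ) 1, HasDerivWithinAt (D m) (D (m+1) x) (Set.Ico (-1:ℝ) 1) x := by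
    intro m x hx
    have h1 : DifferentiableOn ℝ (iteratedDerivWithin m h (Set.Ico (-1:ℝ) 1)) (Set.Ico (-1:ℝ) 1) :=
      hh.1.differentiableOn_iteratedDerivWithin (by exact_mod_cast WithTop.coe_lt_top m) huniq
    have h2 := (h1 x hx).hasDerivWithinAt
    simp only [hDdef]
    rw [iteratedDerivWithin_succ]
    exact h2
  have hDz : ∀ x, D 0 x = h x := by intro x; simp [hDdef, iteratedDerivWithin_zero]
  refine ⟨fun j => D j (-1) / (j.factorial : ℝ), ?_, ?_⟩
  · intro j; exact div_nonneg (hD0 j _ neg_one_mem_S) (by positivity)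
  · intro t ht
    rw [hasSum_iff_tendsto_nat_of_nonneg]
    · have hT : ∀ M, ∑ j ∈ range M, D j (-1) / (j.factorial : ℝ) * (t+1)^j = h t - tayR D 0 M t := by
        intro M; simp [tayR, tayT, hDz]
      simp only [hT]
      have : Filter.Tendsto (fun M => tayR D 0 M t) Filter.atTop (nhds 0) := by
        rcases eq_or_lt_of_le ht.1 with he | hlt
        · subst he
          rw [← Filter.tendsto_add_atTop_iff_nat 1]
          simp only [tayR_neg_one]
          exact tendsto_const_nhds
        · set b := (t+1)/2 with hb
          have hb1 : b < 1 := by rw [hb]; linarith [ht.2]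
          have htb : t < b := by rw [hb]; linarith [ht.2]
          have hbS : b ∈ Set.Ico (-1:ℝ) 1 := ⟨by linarith, hb1⟩
          have ht0 : 0 < t + 1 := by linarith
          have hb0 : 0 < b + 1 := by linarith
          have hlim : Filter.Tendsto (fun M : ℕ => h b * ((t+1)/(b+1))^M) Filter.atTop (nhds 0) := by
            have := (tendsto_pow_atTop_nhds_zero_of_lt_one (r := (t+1)/(b+1)) (by positivity)
              (by rw [div_lt_one hb0]; linarith)).const_mul (h b)
            simpa using this
          refine squeeze_zero (fun M => tayR_nonneg D hD hD0 M 0 t ht) ?_ hlim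
          intro M
          have h1 := tayR_ratio D hD hD0 0 M t b hlt htb.le hb1
          have h2 : tayR D 0 M b ≤ h b := by
            unfold tayR; rw [hDz]
            have : 0 ≤ tayT D 0 M b := by
              unfold tayT
              apply Finset.sum_nonneg
              intro j _
              have := hD0 (0+j) _ neg_one_mem_S
              positivity
            linarith
          rw [div_le_iff₀ (by positivity)] at h1
          calc tayR D 0 M t ≤ tayR D 0 M b / (b+1)^M * (t+1)^M := h1
            _ ≤ h b / (b+1)^M * (t+1)^M := by gcongr
            _ = _ := by rw [div_pow]; ring
      simpa using this.const_sub (h t)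
    · intro j
      have := hD0 j _ neg_one_mem_S
      have : 0 ≤ t + 1 := by linarith [ht.1]
      positivity

theorem HasSum.congr_fun_aux {f g : ℕ → ℝ} {a : ℝ} (h : HasSum f a) (e : ∀ j, g j = f j) : HasSum g a := by
  rwa [funext e]

theorem PS_nonneg {h : ℝ → ℝ} (hh : PS h) (t : ℝ) (ht : t ∈ Set.Ico (-1:ℝ) 1) : 0 ≤ h t := by
  obtain ⟨c, hc, hs⟩ := hh
  refine (hs t ht).nonneg ?_
  intro j
  have := hc j
  have : 0 ≤ t + 1 := by linarith [ht.1]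
  positivity

theorem PS_div {h : ℝ → ℝ} (hh : PS h) (a : ℝ) (ha : a ∈ Set.Ico (-1:ℝ) 1) :
    ∃ g, PS g ∧ ∀ t ∈ Set.Ico (-1:ℝ) 1, h t = h a + (t - a) * g t := by
  obtain ⟨c, hc, hs⟩ := hh
  have ha0 : 0 ≤ a + 1 := by linarith [ha.1]
  -- the double series
  have hsig : ∀ t ∈ Set.Ico (-1:ℝ) 1, Summable (fun m : ℕ => c (m+1) *
      ∑ p ∈ antidiagonal m, (t+1)^p.1 * (a+1)^p.2) := by
    intro t ht
    have ht0 : 0 ≤ t + 1 := by linarith [ht.1]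
    obtain ⟨u, hu1, hu2⟩ := exists_between (max_lt ht.2 ha.2)
    obtain ⟨v, hv1, hv2⟩ := exists_between hu2
    have htu : t < u := lt_of_le_of_lt (le_max_left _ _) hu1
    have hau : a < u := lt_of_le_of_lt (le_max_right _ _) hu1
    have hu0 : 0 ≤ u + 1 := by linarith
    have hv0 : 0 ≤ v + 1 := by linarith
    have s1 := (hs u ⟨by linarith, hu2⟩).summable
    have s2 := (hs v ⟨by linarith, hv2⟩).summable
    have s3 := ((summable_nat_add_iff 1).2 (s2.sub s1)).mul_left ((v - u)⁻¹)
    refine Summable.of_nonneg_of_le ?_ ?_ s3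
    · intro m
      exact mul_nonneg (hc _) (Finset.sum_nonneg (fun p _ => by positivity))
    · intro m
      have e : ∑ p ∈ antidiagonal m, (v+1)^p.1 * (u+1)^p.2 = (v-u)⁻¹ * ((v+1)^(m+1) - (u+1)^(m+1)) := by
        have h1 := (Commute.all (v+1) (u+1)).geom_sum₂_mul (m+1)
        rw [Finset.Nat.sum_antidiagonal_eq_sum_range_succ (fun i j => (v+1)^i * (u+1)^j) m]
        rw [show v + 1 - (u+1) = v - u by ring] at h1
        rw [← h1, mul_comm (v-u)⁻¹, mul_assoc, mul_inv_cancel₀ (by linarith), mul_one]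
        rfl
      have : ∑ p ∈ antidiagonal m, (t+1)^p.1 * (a+1)^p.2 ≤ ∑ p ∈ antidiagonal m, (v+1)^p.1 * (u+1)^p.2 := by
        apply Finset.sum_le_sum
        intro p _
        gcongr <;> linarith
      calc _ ≤ c (m+1) * ∑ p ∈ antidiagonal m, (v+1)^p.1 * (u+1)^p.2 := mul_le_mul_of_nonneg_left this (hc _)
        _ = _ := by rw [e]; ring
  have hprod : ∀ t ∈ Set.Ico (-1:ℝ) 1, Summable (fun p : ℕ × ℕ => c (p.1 + p.2 + 1) * ((t+1)^p.1 * (a+1)^p.2)) := by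
    intro t ht
    have ht0 : 0 ≤ t + 1 := by linarith [ht.1]
    rw [← (Finset.HasAntidiagonal.sigmaAntidiagonalEquivProd (A := ℕ)).summable_iff, summable_sigma_of_nonneg]
    · refine ⟨fun m => (hasSum_fintype _).summable, ?_⟩
      refine (hsig t ht).congr ?_
      intro m
      rw [tsum_fintype, Finset.mul_sum, ← Finset.sum_coe_sort (antidiagonal m)]
      apply Finset.sum_congr rfl
      rintro ⟨p, hp⟩ _
      have := Finset.HasAntidiagonal.mem_antidiagonal.1 hp
      simp [Finset.HasAntidiagonal.sigmaAntidiagonalEquivProd, this]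
    · rintro ⟨m, p⟩
      have := hc (p.1.1 + p.1.2 + 1)
      simp [Finset.HasAntidiagonal.sigmaAntidiagonalEquivProd]
      positivity
  have hy : ∀ i, Summable (fun j => c (i+j+1) * (a+1)^j) := by
    intro i
    have h0 := (hprod 0 (by norm_num)).prod_factor i
    simpa using h0
  refine ⟨fun t => ∑' p : ℕ × ℕ, c (p.1 + p.2 + 1) * ((t+1)^p.1 * (a+1)^p.2),
    ⟨fun i => ∑' j, c (i+j+1) * (a+1)^j, ?_, ?_⟩, ?_⟩
  · intro i
    exact tsum_nonneg (fun j => mul_nonneg (hc _) (by positivity))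
  · intro t ht
    refine (hprod t ht).hasSum.prod_fiberwise ?_
    intro i
    have := (hy i).hasSum.mul_right ((t+1)^i)
    refine HasSum.congr_fun_aux this ?_
    intro j
    ring
  · intro t ht
    have hS := (hprod t ht).hasSum
    rw [← (Finset.HasAntidiagonal.sigmaAntidiagonalEquivProd (A := ℕ)).hasSum_iff] at hS
    have h2 := hS.sigma (g := fun m : ℕ => c (m+1) * ∑ p ∈ antidiagonal m, (t+1)^p.1 * (a+1)^p.2) (by
      intro m
      have := hasSum_fintype (fun p : antidiagonal m => ((fun p : ℕ × ℕ => c (p.1 + p.2 + 1) * ((t+1)^p.1 * (a+1)^p.2)) ∘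
         (Finset.HasAntidiagonal.sigmaAntidiagonalEquivProd (A := ℕ))) ⟨m, p⟩)
      convert this using 1
      rw [Finset.mul_sum, ← Finset.sum_coe_sort (antidiagonal m)]
      apply Finset.sum_congr rfl
      rintro ⟨p, hp⟩ _
      have := Finset.HasAntidiagonal.mem_antidiagonal.1 hp
      simp [Finset.HasAntidiagonal.sigmaAntidiagonalEquivProd, this])
    have h3 := h2.mul_left (t - a)
    have h4 := (hasSum_nat_add_iff' 1).2 ((hs t ht).sub (hs a ha))
    have h5 : (fun m : ℕ => (t - a) * (c (m+1) * ∑ p ∈ antidiagonal m, (t+1)^p.1 * (a+1)^p.2))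
       = fun m => c (m+1) * (t+1)^(m+1) - c (m+1) * (a+1)^(m+1) := by
      funext m
      have h1 := (Commute.all (t+1) (a+1)).geom_sum₂_mul (m+1)
      rw [Finset.Nat.sum_antidiagonal_eq_sum_range_succ (fun i j => (t+1)^i * (a+1)^j) m]
      rw [show t + 1 - (a+1) = t - a by ring] at h1
      simp only [Nat.add_sub_cancel] at h1
      rw [← mul_sub, ← h1]; ring
    rw [h5] at h3
    have := h3.unique h4
    simp at this
    simp
    linarith

theorem gauss_q (L : ℝ[X] →ₗ[ℝ] ℝ) (k : ℕ) (h0 : ∀ p : ℝ[X], p ≠ 0 → p.degree < k → 0 < L (p*p)) :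
    ∃ q : ℝ[X], q.Monic ∧ q.natDegree = k ∧ ∀ r : ℝ[X], r.degree < k → L (q * r) = 0 := by
  let T : degreeLT ℝ k →ₗ[ℝ] Module.Dual ℝ (degreeLT ℝ k) :=
    LinearMap.mk₂ ℝ (fun p r => L (p.1 * r.1)) (by intros; simp [add_mul]) (by intros; simp)
      (by intros; simp [mul_add]) (by intros; simp)
  have hT : ∀ p r, T p r = L (p.1 * r.1) := fun _ _ => rfl
  have hinj : Function.Injective T := by
    rw [← LinearMap.ker_eq_bot, LinearMap.ker_eq_bot']
    intro p hp
    by_contra hne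
    have := h0 p.1 (fun h => hne (Subtype.ext h)) (mem_degreeLT.1 p.2)
    rw [← hT, hp] at this
    simp at this
  have hfin : FiniteDimensional ℝ (degreeLT ℝ k) := Module.Finite.equiv (degreeLTEquiv ℝ k).symm
  have hsurj : Function.Surjective T :=
    (LinearMap.injective_iff_surjective_of_finrank_eq_finrank (Subspace.dual_finrank_eq).symm).1 hinj
  let φ : Module.Dual ℝ (degreeLT ℝ k) := (L.comp (LinearMap.mulLeft ℝ (X^k))).comp (degreeLT ℝ k).subtype
  obtain ⟨p, hp⟩ := hsurj φ
  have hpd : p.1.degree < k := mem_degreeLT.1 p.2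
  refine ⟨X^k - p.1, by rw [sub_eq_add_neg]; exact monic_X_pow_add (by rwa [degree_neg]), ?_, ?_⟩
  · apply natDegree_eq_of_degree_eq_some
    rw [degree_sub_eq_left_of_degree_lt (by rwa [degree_X_pow]), degree_X_pow]
  · intro r hr
    have := congrArg (fun f => f ⟨r, mem_degreeLT.2 hr⟩) hp
    simp only [hT] at this
    rw [sub_mul, map_sub, this]
    simp [φ]

theorem gauss_roots (L : ℝ[X] →ₗ[ℝ] ℝ) (k : ℕ)
    (h1 : ∀ p : ℝ[X], p ≠ 0 → p.degree < k → 0 < L ((1 - X) * (p * p)))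
    (h2 : ∀ p : ℝ[X], p ≠ 0 → p.degree < k → 0 < L ((1 + X) * (p * p))) :
    ∃ α : Fin k → ℝ, (∀ i, -1 < α i) ∧ (∀ i, α i < 1) ∧ StrictMono α ∧
      ∀ r : ℝ[X], r.degree < k → L ((∏ i, (X - C (α i))) * r) = 0 := by
  have h0 : ∀ p : ℝ[X], p ≠ 0 → p.degree < k → 0 < L (p*p) := by
    intro p hp hd
    have a1 := h1 p hp hd
    have a2 := h2 p hp hd
    have : L ((1 - X) * (p * p)) + L ((1 + X) * (p * p)) = 2 * L (p * p) := by
      rw [← map_add, show (1 - X) * (p * p) + (1 + X) * (p * p) = p * p + p * p by ring, map_add]; ring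
    linarith
  obtain ⟨q, hqm, hqd, hq⟩ := gauss_q L k h0
  have hq0 : q ≠ 0 := hqm.ne_zero
  have key : ∀ s v : ℝ[X], q = s * v → 1 ≤ s.natDegree → v ≠ 0 ∧ v.natDegree + s.natDegree = k ∧ v.degree < k ∧
      L (s * (v * v)) = 0 := by
    intro s v e hs
    have hv : v ≠ 0 := by rintro rfl; simp [e] at hq0
    have hs0 : s ≠ 0 := by rintro rfl; simp [e] at hq0
    have hd : v.natDegree + s.natDegree = k := by
      rw [← hqd, e, natDegree_mul hs0 hv, add_comm]
    have hvd : v.degree < k := by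
      rw [degree_eq_natDegree hv]; exact_mod_cast (by omega)
    refine ⟨hv, hd, hvd, ?_⟩
    rw [← mul_assoc, ← e]; exact hq v hvd
  have key2 : ∀ (a : ℝ) (v : ℝ[X]), v ≠ 0 → v.natDegree + 2 = k → 0 < L (((X - C a) * v) * ((X - C a) * v)) := by
    intro a v hv hd
    have hne : (X - C a) * v ≠ 0 := mul_ne_zero (X_sub_C_ne_zero a) hv
    apply h0 _ hne
    rw [degree_eq_natDegree hne, natDegree_mul (X_sub_C_ne_zero a) hv, natDegree_X_sub_C]
    exact_mod_cast (by omega)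
  -- roots are inside
  have hin : ∀ a, q.IsRoot a → -1 < a ∧ a < 1 := by
    intro a ha
    obtain ⟨v, hv⟩ := dvd_iff_isRoot.2 ha
    obtain ⟨v0, -, vd, vL⟩ := key _ _ hv (by simp)
    have b0 := h0 v v0 vd
    have b1 := h1 v v0 vd
    have b2 := h2 v v0 vd
    constructor
    · by_contra hcon
      have : L ((X - C a) * (v*v)) = L ((1+X) * (v*v)) + (-1 - a) * L (v * v) := by
        rw [show (X - C a) * (v*v) = (1+X) * (v*v) + (-1-a) • (v*v) by
          rw [smul_eq_C_mul]; simp; ring, map_add, map_smul]; rfl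
      nlinarith
    · by_contra hcon
      have : L ((X - C a) * (v*v)) = - L ((1-X) * (v*v)) + (1 - a) * L (v * v) := by
        rw [show (X - C a) * (v*v) = -((1-X) * (v*v)) + (1-a) • (v*v) by
          rw [smul_eq_C_mul]; simp; ring, map_add, map_smul, map_neg]; rfl
      nlinarith
  have hnodup : q.roots.Nodup := by
    rw [Multiset.nodup_iff_count_le_one]
    intro a
    by_contra hcon
    push Not at hcon
    rw [count_roots] at hcon
    obtain ⟨v, hv⟩ := (le_rootMultiplicity_iff hq0 (a := a) (n := 2)).1 hcon
    obtain ⟨v0, vd, -, vL⟩ := key _ _ hv (by simp [natDegree_pow])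
    rw [natDegree_pow, natDegree_X_sub_C] at vd
    have := key2 a v v0 (by omega)
    rw [show (X - C a) * v * ((X - C a) * v) = (X - C a)^2 * (v*v) by ring] at this
    linarith
  have hcard : q.roots.card = k := by
    obtain ⟨v, hv, hvd, hvr⟩ := exists_prod_multiset_X_sub_C_mul q
    by_contra hne
    have hvpos : 0 < v.degree := by
      rw [← natDegree_pos_iff_degree_pos]; omega
    have hmap : (v.map (algebraMap ℝ ℂ)).degree ≠ 0 := by
      rw [degree_map]; exact hvpos.ne'
    obtain ⟨z, hz⟩ := IsAlgClosed.exists_root _ hmap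
    have hz' : aeval z v = 0 := by
      rw [aeval_def, ← eval_map]; exact hz
    by_cases him : z.im = 0
    · have hzr : z = (z.re : ℂ) := by apply Complex.ext <;> simp [him]
      rw [hzr] at hz'
      have : v.eval z.re = 0 := by
        have h3 : aeval ((algebraMap ℝ ℂ) z.re) v = 0 := hz'
        rw [aeval_algebraMap_apply] at h3
        simpa using h3
      have h4 : v ≠ 0 := by rintro rfl; simp at hvpos
      have : z.re ∈ v.roots := by rw [mem_roots h4]; exact this
      rw [hvr] at this
      simp at this
    · have hzq : aeval z q = 0 := by rw [← hv, map_mul, hz', mul_zero]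
      obtain ⟨w, hw⟩ := Polynomial.quadratic_dvd_of_aeval_eq_zero_im_ne_zero q hzq him
      have hs : (X ^ 2 - C (2 * z.re) * X + C (‖z‖ ^ 2) : ℝ[X]).natDegree = 2 := by
        compute_degree!
      obtain ⟨w0, wd, wdd, wL⟩ := key _ _ hw (by rw [hs]; norm_num)
      rw [hs] at wd
      have a1 := key2 z.re w w0 wd
      have a2 := h0 w w0 wdd
      have hzn : ‖z‖^2 = z.re^2 + z.im^2 := by rw [Complex.sq_norm, Complex.normSq_apply]; ring
      have : L ((X ^ 2 - C (2 * z.re) * X + C (‖z‖ ^ 2)) * (w * w)) =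
          L ((X - C z.re) * w * ((X - C z.re) * w)) + z.im^2 * L (w*w) := by
        rw [show (X ^ 2 - C (2 * z.re) * X + C (‖z‖ ^ 2)) * (w * w) =
          (X - C z.re) * w * ((X - C z.re) * w) + (z.im^2) • (w*w) by
          rw [smul_eq_C_mul, hzn, show C (2 * z.re) = 2 * C z.re by rw [C_mul]; rfl]; simp; ring, map_add, map_smul]; rfl
      have : 0 ≤ z.im^2 * L (w*w) := by positivity
      linarith
  have hfc : q.roots.toFinset.card = k := by
    rw [Multiset.toFinset_card_of_nodup hnodup, hcard]
  let e := q.roots.toFinset.orderEmbOfFin hfc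
  have hmem : ∀ i, q.IsRoot (e i) := by
    intro i
    have := Finset.orderEmbOfFin_mem q.roots.toFinset hfc i
    rw [Multiset.mem_toFinset] at this
    exact isRoot_of_mem_roots this
  refine ⟨e, fun i => (hin _ (hmem i)).1, fun i => (hin _ (hmem i)).2, e.strictMono, ?_⟩
  have hprod : ∏ i, (X - C (e i)) = q := by
    have hsp : q.roots.card = q.natDegree := by rw [hcard, hqd]
    rw [← prod_multiset_X_sub_C_of_monic_of_roots_card_eq hqm hsp]
    have : q.roots = q.roots.toFinset.val := by
      rw [Multiset.toFinset_val, Multiset.dedup_eq_self.2 hnodup]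
    rw [this]
    have h5 : Finset.univ.map e.toEmbedding = q.roots.toFinset := by
      exact Finset.map_orderEmbOfFin_univ _ hfc
    change _ = ∏ a ∈ q.roots.toFinset, (X - C a)
    rw [← h5, Finset.prod_map]
    rfl
  rw [hprod]
  exact hq

theorem gauss (L : ℝ[X] →ₗ[ℝ] ℝ) (k : ℕ)
    (h1 : ∀ p : ℝ[X], p ≠ 0 → p.degree < k → 0 < L ((1 - X) * (p * p)))
    (h2 : ∀ p : ℝ[X], p ≠ 0 → p.degree < k → 0 < L ((1 + X) * (p * p))) :
    ∃ α ρ : Fin k → ℝ, (∀ i, -1 < α i) ∧ (∀ i, α i < 1) ∧ StrictMono α ∧ (∀ i, 0 < ρ i) ∧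
      ∀ f : ℝ[X], f.degree < (2 * k : ℕ) → L f = ∑ i, ρ i * f.eval (α i) := by
  obtain ⟨α, ha1, ha2, hmono, hq⟩ := gauss_roots L k h1 h2
  have h0 : ∀ p : ℝ[X], p ≠ 0 → p.degree < k → 0 < L (p*p) := by
    intro p hp hd
    have a1 := h1 p hp hd
    have a2 := h2 p hp hd
    have : L ((1 - X) * (p * p)) + L ((1 + X) * (p * p)) = 2 * L (p * p) := by
      rw [← map_add, show (1 - X) * (p * p) + (1 + X) * (p * p) = p * p + p * p by ring, map_add]; ring
    linarith
  set q : ℝ[X] := ∏ i, (X - C (α i)) with hqdef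
  have hqm : q.Monic := monic_prod_of_monic _ _ (fun i _ => monic_X_sub_C _)
  have hqd : q.degree = k := by
    rw [hqdef, degree_prod]; simp
  have hqe : ∀ i, q.eval (α i) = 0 := by
    intro i
    rw [hqdef, eval_prod]
    exact Finset.prod_eq_zero (Finset.mem_univ i) (by simp)
  have hinj : Set.InjOn α (Finset.univ : Finset (Fin k)) := hmono.injective.injOn
  have hex : ∀ f : ℝ[X], f.degree < (2 * k : ℕ) → L f = ∑ i, L (Lagrange.basis Finset.univ α i) * f.eval (α i) := by
    intro f hf
    have hdiv := modByMonic_add_div f q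
    have hm : (f %ₘ q).degree < k := by rw [← hqd]; exact degree_modByMonic_lt f hqm
    have hdd : (f /ₘ q).degree < k := by
      by_cases hz : f /ₘ q = 0
      · rw [hz, degree_zero]; exact WithBot.bot_lt_coe _
      by_cases hlt : f.degree < q.degree
      · exact absurd ((divByMonic_eq_zero_iff hqm).2 hlt) hz
      have h3 := degree_add_divByMonic hqm (not_lt.1 hlt)
      rw [hqd] at h3
      rw [← h3, degree_eq_natDegree hz] at hf
      rw [degree_eq_natDegree hz]
      have : k + (f /ₘ q).natDegree < 2 * k := by exact_mod_cast hf
      exact_mod_cast (by omega)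
    have hLf : L f = L (f %ₘ q) := by
      conv_lhs => rw [← hdiv]
      rw [map_add, hq _ hdd, add_zero]
    have hev : ∀ i, f.eval (α i) = (f %ₘ q).eval (α i) := by
      intro i
      conv_lhs => rw [← hdiv]
      simp [hqe]
    have hinterp := Lagrange.eq_interpolate (s := Finset.univ) (v := α) hinj (f := f %ₘ q) (by simpa using hm)
    rw [hLf]
    conv_lhs => rw [hinterp]
    rw [Lagrange.interpolate_apply, map_sum]
    apply Finset.sum_congr rfl
    intro i _
    rw [hev, ← smul_eq_C_mul, map_smul, smul_eq_mul, mul_comm]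
  refine ⟨α, fun i => L (Lagrange.basis Finset.univ α i), ha1, ha2, hmono, ?_, hex⟩
  intro i
  set b := Lagrange.basis Finset.univ α i with hb
  have hbd : b.degree < k := by
    rw [hb, Lagrange.degree_basis hinj (Finset.mem_univ i)]
    have : 0 < k := Fin.pos i
    simp; omega
  have hb0 : b ≠ 0 := Lagrange.basis_ne_zero hinj (Finset.mem_univ i)
  have hpos := h0 b hb0 hbd
  rw [hex (b*b)] at hpos
  · rw [Finset.sum_eq_single i] at hpos
    · have : b.eval (α i) = 1 := Lagrange.eval_basis_self hinj (Finset.mem_univ i)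
      rw [eval_mul, this] at hpos
      simpa using hpos
    · intro j _ hji
      have : b.eval (α j) = 0 := Lagrange.eval_basis_of_ne hji.symm (Finset.mem_univ j)
      rw [eval_mul, this]; simp
    · simp
  · rw [degree_mul]
    rw [degree_eq_natDegree hb0] at hbd ⊢
    have : b.natDegree < k := by exact_mod_cast hbd
    exact_mod_cast (by omega)

/-- discrete measure -/
noncomputable def dS (m : ℕ) (t ρ : ℕ → ℝ) : ℝ[X] →ₗ[ℝ] ℝ :=
  ∑ a ∈ range m, ρ a • leval (t a)

theorem dS_apply (m : ℕ) (t ρ : ℕ → ℝ) (f : ℝ[X]) : dS m t ρ f = ∑ a ∈ range m, ρ a * f.eval (t a) := by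
  simp [dS, LinearMap.sum_apply, leval]

theorem vanish_aux (m : ℕ) (t : ℕ → ℝ) (ht : ∀ i j, i < j → j < m → t i < t j) (v : ℝ[X]) (hd : v.degree < m)
    (hv : ∀ i < m, v.eval (t i) = 0) : v = 0 := by
  by_contra hne
  have hinj : Set.InjOn t (range m) := by
    intro i hi j hj e
    simp at hi hj
    rcases lt_trichotomy i j with h | h | h
    · linarith [ht i j h hj]
    · exact h
    · linarith [ht j i h hi]
  apply hne
  refine Polynomial.eq_zero_of_degree_lt_of_eval_index_eq_zero (s := range m) (v := t) hinj (by simpa using hd) ?_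
  intro i hi
  exact hv i (by simpa using hi)

section
theorem S_coef (S : ℝ[X] →ₗ[ℝ] ℝ) (p : ℕ → ℝ[X]) (m : ℕ)
    (ho : ∀ i < m, ∀ j < m, i ≠ j → S (p i * p j) = 0)
    (c : ℕ → ℝ) (M : ℕ) (hM : M ≤ m) (j : ℕ) (hj : j < m) :
    S ((∑ l ∈ range M, C (c l) * p l) * p j) = if j < M then c j * S (p j * p j) else 0 := by
  rw [Finset.sum_mul, map_sum]
  have : ∀ l ∈ range M, S (C (c l) * p l * p j) = if l = j then c j * S (p j * p j) else 0 := by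
    intro l hl
    simp at hl
    rw [mul_assoc, ← smul_eq_C_mul, map_smul, smul_eq_mul]
    split_ifs with h
    · rw [h]
    · rw [ho l (by omega) j hj h, mul_zero]
  rw [Finset.sum_congr rfl this]
  simp

theorem S_low (S : ℝ[X] →ₗ[ℝ] ℝ) (p : ℕ → ℝ[X]) (m : ℕ)
    (hd : ∀ i, (p i).natDegree ≤ i) (hc : ∀ i, 0 < (p i).coeff i)
    (ho : ∀ i < m, ∀ j < m, i ≠ j → S (p i * p j) = 0)
    (f : ℝ[X]) (j : ℕ) (hj : j < m) (hf : f.degree < j) : S (f * p j) = 0 := by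
  obtain ⟨c, rfl⟩ := expand_fam p hd (fun i => (hc i).ne') j f hf
  rw [S_coef S p m ho c j hj.le j hj]
  simp

theorem S_repr (S : ℝ[X] →ₗ[ℝ] ℝ) (p : ℕ → ℝ[X]) (m : ℕ)
    (hd : ∀ i, (p i).natDegree ≤ i) (hc : ∀ i, 0 < (p i).coeff i)
    (ho : ∀ i < m, ∀ j < m, i ≠ j → S (p i * p j) = 0)
    (hn : ∀ i < m, 0 < S (p i * p i)) (T : ℝ) (j : ℕ) (hj : j < m) (f : ℝ[X]) (hf : f.degree < (j+1:ℕ)) :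
    S (f * ∑ l ∈ range (j+1), C ((p l).eval T / S (p l * p l)) * p l) = f.eval T := by
  obtain ⟨c, rfl⟩ := expand_fam p hd (fun i => (hc i).ne') (j+1) f hf
  rw [Finset.mul_sum, map_sum, eval_finsetSum]
  apply Finset.sum_congr rfl
  intro l hl
  simp at hl
  rw [mul_left_comm, ← smul_eq_C_mul, map_smul, S_coef S p m ho c (j+1) (by omega) l (by omega)]
  have := hn l (by omega)
  simp [show l < j + 1 by omega]
  field_simp
end

theorem disc : ∀ (m : ℕ) (t ρ : ℕ → ℝ) (p : ℕ → ℝ[X]), (∀ i j, i < j → j < m → t i < t j) → (∀ i < m, 0 < ρ i) →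
    (∀ i, (p i).natDegree ≤ i) → (∀ i, 0 < (p i).coeff i) →
    (∀ i < m, ∀ j < m, i ≠ j → dS m t ρ (p i * p j) = 0) → ∀ j < m, ∃ c : ℕ → ℝ, (∀ l < m, 0 ≤ c l) ∧
    ∏ i ∈ range j, (X - C (t i)) = ∑ l ∈ range m, C (c l) * p l := by
  intro m
  induction m with
  | zero => intro t ρ p _ _ _ _ _ j hj; omega
  | succ m ih =>
  intro t ρ p ht hρ hd hc ho j hj
  set S := dS (m+1) t ρ with hS
  have hpne : ∀ i, p i ≠ 0 := by
    intro i h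
    have := hc i
    rw [h] at this; simp at this
  have hdeg : ∀ i, (p i).degree ≤ i := fun i => natDegree_le_iff_degree_le.1 (hd i)
  have hn : ∀ i < m+1, 0 < S (p i * p i) := by
    intro i hi
    rw [hS, dS_apply]
    have hnn : ∀ a ∈ range (m+1), 0 ≤ ρ a * (p i * p i).eval (t a) := by
      intro a ha
      rw [eval_mul]
      exact mul_nonneg (hρ a (by simpa using ha)).le (mul_self_nonneg _)
    refine lt_of_le_of_ne (Finset.sum_nonneg hnn) ?_
    intro h0
    have := (Finset.sum_eq_zero_iff_of_nonneg hnn).1 h0.symm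
    refine hpne i (vanish_aux (m+1) t ht (p i) (lt_of_le_of_lt (hdeg i) (by exact_mod_cast hi)) ?_)
    intro a ha
    have h1 := this a (by simpa using ha)
    rw [eval_mul] at h1
    have := hρ a ha
    simpa [this.ne'] using h1
  have hpos : ∀ l < m+1, 0 < (p l).eval (t m) := by
    intro l hl
    by_contra hcon
    push Not at hcon
    have hnd : (p l).natDegree = l := le_antisymm (hd l) (le_natDegree_of_ne_zero (hc l).ne')
    have hl0 : 0 < l := by
      rcases Nat.eq_zero_or_pos l with h | h
      · subst h
        rw [eq_C_of_natDegree_eq_zero hnd, eval_C] at hcon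
        linarith [hc 0]
      · exact h
    have hlc : 0 ≤ (p l).leadingCoeff := by rw [leadingCoeff, hnd]; exact (hc l).le
    have htend := tendsto_atTop_of_leadingCoeff_nonneg (p l) (by rw [← natDegree_pos_iff_degree_pos]; omega) hlc
    obtain ⟨x, hx1, hx2⟩ := ((htend.eventually_ge_atTop 0).and (Filter.eventually_ge_atTop (t m))).exists
    obtain ⟨a, ha, ha0⟩ := intermediate_value_Icc hx2 (p l).continuous.continuousOn ⟨hcon, hx1⟩
    obtain ⟨v, hv⟩ := dvd_iff_isRoot.2 ha0
    have hv0 : v ≠ 0 := by rintro rfl; exact hpne l (by rw [hv, mul_zero])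
    have hvd : v.natDegree + 1 = l := by
      rw [← hnd, hv, natDegree_mul (X_sub_C_ne_zero a) hv0, natDegree_X_sub_C, add_comm]
    have hz : S (v * p l) = 0 := by
      apply S_low S p (m+1) hd hc ho v l hl
      rw [degree_eq_natDegree hv0]; exact_mod_cast (by omega)
    rw [hS, dS_apply] at hz
    have hnn : ∀ i ∈ range (m+1), ρ i * (v * p l).eval (t i) ≤ 0 := by
      intro i hi
      simp at hi
      have h1 : t i ≤ a := by
        rcases Nat.lt_or_ge i m with h | h
        · exact (ht i m h (by omega)).le.trans ha.1
        · rw [show i = m by omega]; exact ha.1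
      rw [hv]
      simp only [eval_mul, eval_sub, eval_X, eval_C]
      have h2 := mul_nonneg (hρ i (by omega)).le (mul_nonneg (sub_nonneg.2 h1) (mul_self_nonneg (v.eval (t i))))
      linarith
    have hall := (Finset.sum_eq_zero_iff_of_nonpos hnn).1 hz
    refine hv0 (vanish_aux m t (fun i j hij hj => ht i j hij (by omega)) v ?_ ?_)
    · rw [degree_eq_natDegree hv0]; exact_mod_cast (by omega)
    · intro i hi
      have h1 := hall i (by simp; omega)
      rw [hv] at h1
      simp only [eval_mul, eval_sub, eval_X, eval_C] at h1
      have h2 := ht i m hi (by omega)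
      have h3 : t i - a ≠ 0 := by have := ha.1; intro h; linarith
      have h4 := (hρ i (by omega)).ne'
      simpa [h3, h4] using h1
  rcases Nat.lt_or_ge j m with hjm | hjm
  · -- induct
    let q : ℕ → ℝ[X] := fun i => if i < m then ∑ l ∈ range (i+1), C ((p l).eval (t m) / S (p l * p l)) * p l else X^i
    have hqd : ∀ i, (q i).natDegree ≤ i := by
      intro i
      simp only [q]
      split_ifs
      · apply natDegree_sum_le_of_forall_le
        intro l hl
        simp at hl
        exact (natDegree_C_mul_le _ _).trans ((hd l).trans (by omega))
      · simp
    have hqc : ∀ i, 0 < (q i).coeff i := by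
      intro i
      simp only [q]
      split_ifs with hi
      · rw [finsetSum_coeff, Finset.sum_range_succ, Finset.sum_eq_zero, zero_add, coeff_C_mul]
        · have := hpos i (by omega)
          have := hn i (by omega)
          have := hc i
          positivity
        · intro l hl
          simp at hl
          rw [coeff_C_mul, coeff_eq_zero_of_natDegree_lt (lt_of_le_of_lt (hd l) hl), mul_zero]
      · simp
    have hq1 : ∀ i j, i < j → j < m → dS m t (fun a => ρ a * (t m - t a)) (q i * q j) = 0 := by
      intro i j hij hj
      have e1 : dS m t (fun a => ρ a * (t m - t a)) (q i * q j) = S (((C (t m) - X) * q i) * q j) := by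
        rw [hS, dS_apply, dS_apply, Finset.sum_range_succ]
        simp only [eval_mul, eval_sub, eval_X, eval_C, sub_self, zero_mul, mul_zero, add_zero]
        apply Finset.sum_congr rfl
        intro a _; ring
      have e2 : q j = ∑ l ∈ range (j+1), C ((p l).eval (t m) / S (p l * p l)) * p l := by
        simp [q, hj]
      rw [e1, e2, S_repr S p (m+1) hd hc ho hn (t m) j (by omega)]
      · simp
      · have h1 : ((C (t m) - X) * q i).natDegree ≤ 1 + i := by
          refine natDegree_mul_le_of_le ?_ (hqd i)
          compute_degree
        exact lt_of_le_of_lt (natDegree_le_iff_degree_le.1 h1) (by exact_mod_cast (by omega))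
    obtain ⟨c, hc0, hce⟩ := ih t (fun a => ρ a * (t m - t a)) q (fun i j hij hj => ht i j hij (by omega))
      (fun i hi => mul_pos (hρ i (by omega)) (sub_pos.2 (ht i m hi (by omega)))) hqd hqc (by
        intro i hi j hj hij
        rcases Nat.lt_or_ge i j with h | h
        · exact hq1 i j h hj
        · rw [mul_comm]; exact hq1 j i (by omega) hi) j hjm
    refine ⟨fun l => ∑ i ∈ range m, if l < i + 1 then c i * ((p l).eval (t m) / S (p l * p l)) else 0, ?_, ?_⟩
    · intro l hl
      apply Finset.sum_nonneg
      intro i hi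
      split_ifs
      · have := hpos l hl
        have := hn l hl
        have := hc0 i (by simpa using hi)
        positivity
      · exact le_rfl
    · rw [hce]
      simp only [map_sum, Finset.sum_mul]
      rw [Finset.sum_comm]
      apply Finset.sum_congr rfl
      intro i hi
      simp at hi
      simp only [q, hi, if_true]
      rw [Finset.mul_sum]
      rw [← Finset.sum_subset (s₁ := range (i+1)) (s₂ := range (m+1)) (by intro x; simp; omega)]
      · apply Finset.sum_congr rfl
        intro l hl
        simp at hl
        rw [if_pos (by omega), C_mul]; ring
      · intro l hl hl2
        rw [if_neg (by simpa using hl2)]; simp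
  · have hjm' : j = m := by omega
    subst hjm'
    set w := ∏ i ∈ range j, (X - C (t i)) with hw
    have hwd : w.degree < (j+1:ℕ) := by
      rw [hw, degree_prod]; simp
      exact_mod_cast (Nat.lt_succ_self j)
    obtain ⟨c, hce⟩ := expand_fam p hd (fun i => (hc i).ne') (j+1) w hwd
    refine ⟨c, ?_, hce⟩
    intro l hl
    have h1 := S_coef S p (j+1) ho c (j+1) le_rfl l hl
    rw [← hce, if_pos hl, hS, dS_apply, Finset.sum_range_succ, ← hS, Finset.sum_eq_zero, zero_add] at h1
    · have h2 : 0 < w.eval (t j) := by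
        rw [hw, eval_prod]
        apply Finset.prod_pos
        intro i hi
        simp at hi ⊢
        exact ht i j hi (by omega)
      have h3 := hpos l hl
      have h4 := hρ j (by omega)
      have h5 : 0 < c l * S (p l * p l) := by rw [← h1, eval_mul]; positivity
      exact (pos_of_mul_pos_left h5 (hn l hl).le).le
    · intro i hi
      rw [eval_mul, hw, eval_prod, Finset.prod_eq_zero hi (by simp)]; simp

theorem gaussN (L : ℝ[X] →ₗ[ℝ] ℝ) (k : ℕ)
    (h1 : ∀ p : ℝ[X], p ≠ 0 → p.degree < k → 0 < L ((1 - X) * (p * p)))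
    (h2 : ∀ p : ℝ[X], p ≠ 0 → p.degree < k → 0 < L ((1 + X) * (p * p))) :
    ∃ α ρ : ℕ → ℝ, (∀ i < k, -1 < α i) ∧ (∀ i < k, α i < 1) ∧ (∀ i j, i < j → j < k → α i < α j) ∧
      (∀ i < k, 0 < ρ i) ∧
      ∀ f : ℝ[X], f.degree < (2 * k : ℕ) → L f = ∑ i ∈ range k, ρ i * f.eval (α i) := by
  obtain ⟨α, ρ, a1, a2, a3, a4, a5⟩ := gauss L k h1 h2
  refine ⟨fun i => if h : i < k then α ⟨i, h⟩ else 0, fun i => if h : i < k then ρ ⟨i, h⟩ else 0, ?_, ?_, ?_, ?_, ?_⟩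
  · intro i hi; simp [hi, a1]
  · intro i hi; simp [hi, a2]
  · intro i j hij hj
    simp only [hj, hij.trans hj, dif_pos]
    exact a3 hij
  · intro i hi; simp [hi, a4]
  · intro f hf
    rw [a5 f hf, ← Fin.sum_univ_eq_sum_range (fun i => (if h : i < k then ρ ⟨i, h⟩ else 0) *
      f.eval (if h : i < k then α ⟨i, h⟩ else 0)) k]
    apply Finset.sum_congr rfl
    intro i _
    simp

theorem PD.lin {n : ℕ} {hn : 2 ≤ n} (m : ℕ) (c : ℕ → ℝ) (F : ℕ → ℝ[X]) (hc : ∀ l < m, 0 ≤ c l)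
    (hF : ∀ l, PD n hn (F l)) : PD n hn (∑ l ∈ range m, C (c l) * F l) := by
  apply PD.sum
  intro l hl
  rw [← smul_eq_C_mul]
  exact PD.smul (hc l (by simpa using hl)) (hF l)

theorem newton (n : ℕ) (hn : 2 ≤ n) (k : ℕ) (β : ℕ → ℝ) (hβ : ∀ i < k, β i ∈ Set.Ico (-1:ℝ) 1)
    (hU : ∀ j ≤ k, PD n hn (∏ i ∈ range j, (X - C (β i)))) (h : ℝ → ℝ) (hh : PS h) (j : ℕ) (hj : j ≤ k) :
    ∃ (f : ℝ[X]) (g : ℝ → ℝ), f.natDegree ≤ 2 * j - 1 ∧ PD n hn f ∧ PS g ∧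
      ∀ t ∈ Set.Ico (-1:ℝ) 1, h t = f.eval t + ((∏ i ∈ range j, (X - C (β i))).eval t)^2 * g t := by
  induction j with
  | zero => exact ⟨0, h, by simp, PD.zero, hh, by simp⟩
  | succ j ih =>
    obtain ⟨f, g, hd, hf, hg, he⟩ := ih (by omega)
    have hb := hβ j (by omega)
    obtain ⟨g1, hg1, e1⟩ := PS_div hg (β j) hb
    obtain ⟨g2, hg2, e2⟩ := PS_div hg1 (β j) hb
    set U : ℝ[X] := ∏ i ∈ range j, (X - C (β i)) with hUdef
    have hUs : ∏ i ∈ range (j+1), (X - C (β i)) = U * (X - C (β j)) := Finset.prod_range_succ _ _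
    have hUd : U.natDegree = j := by
      rw [hUdef, natDegree_prod_of_monic _ _ (fun i _ => monic_X_sub_C _)]; simp
    have hP0 := hU j (by omega)
    have hP1 := hU (j+1) hj
    rw [← hUdef] at hP0
    rw [hUs] at hP1 ⊢
    refine ⟨f + (g (β j) • (U * U) + g1 (β j) • (U * (U * (X - C (β j))))), g2, ?_, ?_, hg2, ?_⟩
    · have d1 : (U * U).natDegree ≤ j + j := natDegree_mul_le_of_le hUd.le hUd.le
      have d2 : (U * (U * (X - C (β j)))).natDegree ≤ j + (j + 1) :=
        natDegree_mul_le_of_le hUd.le (natDegree_mul_le_of_le hUd.le (natDegree_X_sub_C_le _))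
      refine natDegree_add_le_of_degree_le (by omega) (natDegree_add_le_of_degree_le ?_ ?_)
      · exact (natDegree_smul_le _ _).trans (by omega)
      · exact (natDegree_smul_le _ _).trans (by omega)
    · exact hf.add ((PD.smul (PS_nonneg hg _ hb) (hP0.mul hP0)).add (PD.smul (PS_nonneg hg1 _ hb) (hP0.mul hP1)))
    · intro t ht
      rw [he t ht, e1 t ht, e2 t ht]
      simp only [eval_add, eval_smul, eval_mul, eval_sub, eval_X, eval_C, smul_eq_mul]
      ring

/-- the functional `I f - f(1)/N` -/
noncomputable def LN (n : ℕ) (hn : 2 ≤ n) (N : ℝ) : ℝ[X] →ₗ[ℝ] ℝ := gI n hn - N⁻¹ • leval 1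

theorem LN_apply (n : ℕ) (hn : 2 ≤ n) (N : ℝ) (f : ℝ[X]) : LN n hn N f = gI n hn f - f.eval 1 / N := by
  simp [LN, leval]; ring

theorem I_pos' (n : ℕ) (hn : 2 ≤ n) (s p : ℝ[X]) (hs : s ≠ 0) (hs1 : ∀ t ∈ Set.Icc (-1:ℝ) 1, 0 ≤ s.eval t) (hp : p ≠ 0) :
    0 < gI n hn (s * (p * p)) := by
  apply gI_pos n hn _ (mul_ne_zero hs (mul_ne_zero hp hp))
  intro t ht
  rw [eval_mul, eval_mul]
  exact mul_nonneg (hs1 t ht) (mul_self_nonneg _)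

theorem one_sub_X_ne : (1 - X : ℝ[X]) ≠ 0 := by
  intro h; have := congrArg (eval 0) h; simp at this
theorem one_add_X_ne : (1 + X : ℝ[X]) ≠ 0 := by
  intro h; have := congrArg (eval 0) h; simp at this

theorem CS_aux (M : ℝ[X] →ₗ[ℝ] ℝ) (hM : ∀ p, 0 ≤ M (p * p)) (w p : ℝ[X]) (d a : ℝ) (hd : 0 < d) (h1 : M (w * w) = d)
    (h2 : M (w * p) = a) : a^2 ≤ d * M (p * p) := by
  have h := hM (d • p - a • w)
  have e : (d • p - a • w) * (d • p - a • w) = (d*d) • (p*p) - (2*d*a) • (w*p) + (a*a) • (w*w) := by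
    simp only [smul_eq_C_mul, C_mul]
    rw [show (C (2:ℝ)) = 2 from rfl]
    ring
  rw [e, map_add, map_sub, map_smul, map_smul, map_smul, h1, h2] at h
  simp only [smul_eq_mul] at h
  have : 0 ≤ d * (d * M (p*p) - a^2) := by nlinarith
  have := nonneg_of_mul_nonneg_right this hd
  linarith

theorem pos0 (n : ℕ) (hn : 2 ≤ n) (m : ℕ) (N : ℝ) (hN : 2 * dd n m < N) (p : ℝ[X]) (hp : p ≠ 0) (hd : p.degree < (m+1:ℕ)) :
    0 < LN n hn N ((1 + X) * (p * p)) := by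
  have hdd := dd_pos n m
  have hpos := I_pos' n hn (1 + X) p one_add_X_ne (by intro t ht; simp; linarith [ht.1]) hp
  have hcs := CS_aux ((gI n hn).comp (LinearMap.mulLeft ℝ (1 + X))) (by
      intro p
      by_cases h : p = 0
      · simp [h]
      · exact (I_pos' n hn (1 + X) p one_add_X_ne (by intro t ht; simp; linarith [ht.1]) h).le)
    (W n m) p (dd n m) (p.eval 1) hdd (by
      have := I_WW n hn m
      have := I_XWW n hn m
      simp only [LinearMap.comp_apply, LinearMap.mulLeft_apply]
      rw [show (1 + X) * (W n m * W n m) = W n m * W n m + W n m * (X * W n m) by ring, map_add]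
      linarith) (by
      simp only [LinearMap.comp_apply, LinearMap.mulLeft_apply]
      rw [show (1 + X) * (W n m * p) = W n m * ((1 + X) * p) by ring, I_W]
      · simp; ring
      · rw [degree_mul, degree_eq_natDegree hp] at *
        have h1 : (1 + X : ℝ[X]).degree = 1 := by
          rw [add_comm]; exact degree_X_add_C 1
        rw [h1]
        have : p.natDegree < m + 1 := by exact_mod_cast hd
        exact_mod_cast (by omega))
  simp only [LinearMap.comp_apply, LinearMap.mulLeft_apply] at hcs
  rw [LN_apply, sub_pos, div_lt_iff₀ (by linarith)]
  simp only [eval_mul, eval_add, eval_one, eval_X]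
  nlinarith

theorem pos1 (n : ℕ) (hn : 2 ≤ n) (m : ℕ) (N : ℝ) (hN : dd n (m+1) + dd n m < N) (p : ℝ[X]) (hp : p ≠ 0)
    (hd : p.degree < (m+2:ℕ)) : 0 < LN n hn N (p * p) := by
  have hdd := dd_pos n m
  have hdd1 := dd_pos n (m+1)
  have hpos := I_sq_pos n hn p hp
  have key : ∀ g : ℝ[X], g.degree < (m+2:ℕ) → gI n hn ((W n (m+1) + W n m) * g) = g.eval 1 := by
    intro g hg
    rw [add_mul, map_add, I_W n hn m g hg, I_W n hn (m+1) g (hg.trans (by exact_mod_cast (by omega)))]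
    ring
  have hcs := CS_aux (gI n hn) (by
      intro p
      by_cases h : p = 0
      · simp [h]
      · exact (I_sq_pos n hn p h).le)
    (W n (m+1) + W n m) p (dd n (m+1) + dd n m) (p.eval 1) (by linarith) (by
      rw [key]
      · rw [eval_add, (W_eval_one n hn m).1, (W_eval_one n hn (m+1)).1]
      · have h1 := (W_deg n hn m).1
        have h2 := (W_deg n hn (m+1)).1
        have h3 : (W n (m+1) + W n m).natDegree ≤ m + 1 := natDegree_add_le_of_degree_le h2 (by omega)
        exact lt_of_le_of_lt (natDegree_le_iff_degree_le.1 h3) (by exact_mod_cast (by omega)))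
    (key p hd)
  rw [LN_apply, sub_pos, div_lt_iff₀ (by linarith)]
  simp only [eval_mul]
  nlinarith

theorem case0 (n : ℕ) (hn : 2 ≤ n) (m : ℕ) (N : ℝ) (hN : 2 * dd n m < N) :
    ∃ α ρ : ℕ → ℝ, (∀ i < m+1, -1 < α i) ∧ (∀ i < m+1, α i < 1) ∧ (∀ i j, i < j → j < m+1 → α i < α j) ∧
      (∀ i < m+1, 0 < ρ i) ∧
      (∀ f : ℝ[X], f.natDegree ≤ 2 * m + 1 → gI n hn f = f.eval 1 / N + ∑ i ∈ range (m+1), ρ i * f.eval (α i)) ∧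
      ∀ j ≤ m+1, PD n hn (∏ i ∈ range j, (X - C (α i))) := by
  have hN0 : 0 < N := by linarith [dd_pos n m]
  obtain ⟨α, ρ, a1, a2, a3, a4, a5⟩ := gaussN (LN n hn N) (m+1) (by
    intro p hp _
    rw [LN_apply]
    simp only [eval_mul, eval_sub, eval_one, eval_X, sub_self, zero_mul, zero_div, sub_zero]
    exact I_pos' n hn (1 - X) p one_sub_X_ne (by intro t ht; simp; linarith [ht.2]) hp)
    (fun p hp hd => pos0 n hn m N hN p hp hd)
  have hex : ∀ f : ℝ[X], f.natDegree ≤ 2 * m + 1 →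
      gI n hn f = f.eval 1 / N + ∑ i ∈ range (m+1), ρ i * f.eval (α i) := by
    intro f hf
    have := a5 f (lt_of_le_of_lt (natDegree_le_iff_degree_le.1 hf) (by exact_mod_cast (by omega)))
    rw [LN_apply] at this
    linarith
  refine ⟨α, ρ, a1, a2, a3, a4, hex, ?_⟩
  intro j hj
  let t : ℕ → ℝ := fun i => if i < m + 1 then α i else 1
  let r : ℕ → ℝ := fun i => if i < m + 1 then ρ i else 1 / N
  obtain ⟨c, hc, he⟩ := disc (m+2) t r (G n) (by
      intro i j hij hj
      simp only [t]
      split_ifs with h1 h2 h2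
      · exact a3 i j hij h2
      · exact a2 i h1
      · omega
      · omega) (by
      intro i hi
      simp only [r]
      split_ifs with h
      · exact a4 i h
      · positivity) (fun i => (G_deg n hn i).1.1) (fun i => (G_deg n hn i).1.2) (by
      intro i hi j hj hij
      rw [dS_apply, Finset.sum_range_succ]
      have h1 := hex (G n i * G n j) ((natDegree_mul_le_of_le (G_deg n hn i).1.1 (G_deg n hn j).1.1).trans (by omega))
      rw [G_orth n hn i j hij] at h1
      have h2 : ∑ a ∈ range (m+1), r a * (G n i * G n j).eval (t a) = ∑ a ∈ range (m+1), ρ a * (G n i * G n j).eval (α a) := by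
        apply Finset.sum_congr rfl
        intro a ha
        simp only [Finset.mem_range] at ha
        simp only [r, t, ha, if_true]
      rw [h2]
      simp only [r, t, lt_irrefl, if_false]
      rw [h1]; ring) j (by omega)
  have e : ∏ i ∈ range j, (X - C (α i)) = ∏ i ∈ range j, (X - C (t i)) := by
    apply Finset.prod_congr rfl
    intro i hi
    simp only [Finset.mem_range] at hi
    simp only [t, show i < m + 1 by omega, if_true]
  rw [e, he]
  exact PD.lin _ _ _ hc (PD_G n hn)

theorem dd_le (n i : ℕ) (hn : 2 ≤ n) : dd n i ≤ dd n (i+1) := by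
  have h := dd_succ n i hn
  have h1 := dd_pos n i
  have h2 : (2:ℝ) ≤ n := by exact_mod_cast hn
  have h3 : (0:ℝ) ≤ i := Nat.cast_nonneg i
  have : dd n i * (i+1) ≤ dd n (i+1) * (i+1) := by rw [h]; nlinarith
  exact le_of_mul_le_mul_right this (by linarith)

theorem case1 (n : ℕ) (hn : 2 ≤ n) (m : ℕ) (N : ℝ) (hN : dd n (m+1) + dd n m < N) (hN2 : N ≤ 2 * dd n (m+1)) :
    ∃ (α ρ : ℕ → ℝ) (ρ0 : ℝ), (∀ i < m+1, -1 < α i) ∧ (∀ i < m+1, α i < 1) ∧ (∀ i j, i < j → j < m+1 → α i < α j) ∧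
      (∀ i < m+1, 0 < ρ i) ∧ 0 < ρ0 ∧
      (∀ f : ℝ[X], f.natDegree ≤ 2 * m + 2 →
        gI n hn f = f.eval 1 / N + (ρ0 * f.eval (-1) + ∑ i ∈ range (m+1), ρ i * f.eval (α i))) ∧
      ∀ j ≤ m+1, PD n hn (∏ i ∈ range j, (X - C (α i))) := by
  have hdd := dd_pos n m
  have hdd1 := dd_pos n (m+1)
  have hddle := dd_le n m hn
  have hN0 : 0 < N := by linarith
  obtain ⟨α, lam, a1, a2, a3, a4, a5⟩ := gaussN ((LN n hn N).comp (LinearMap.mulLeft ℝ (1 + X))) (m+1) (by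
    intro p hp _
    simp only [LinearMap.comp_apply, LinearMap.mulLeft_apply]
    rw [LN_apply, ← mul_assoc]
    simp only [eval_mul, eval_sub, eval_one, eval_X, sub_self, zero_mul, mul_zero, zero_div, sub_zero]
    refine I_pos' n hn _ p (mul_ne_zero one_add_X_ne one_sub_X_ne) ?_ hp
    intro t ht
    simp only [eval_mul, eval_sub, eval_one, eval_X, eval_add]
    exact mul_nonneg (by linarith [ht.1]) (by linarith [ht.2])) (by
    intro p hp hd
    simp only [LinearMap.comp_apply, LinearMap.mulLeft_apply]
    rw [show (1 + X) * ((1 + X) * (p * p)) = ((1 + X) * p) * ((1 + X) * p) by ring]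
    apply pos1 n hn m N hN _ (mul_ne_zero one_add_X_ne hp)
    have h1 : (1 + X : ℝ[X]).degree = 1 := by
      rw [add_comm]; exact degree_X_add_C 1
    rw [degree_mul, h1]
    rw [degree_eq_natDegree hp] at hd ⊢
    have : p.natDegree < m + 1 := by exact_mod_cast hd
    exact_mod_cast (by omega))
  simp only [LinearMap.comp_apply, LinearMap.mulLeft_apply] at a5
  have hap : ∀ i < m+1, 0 < 1 + α i := fun i hi => by linarith [a1 i hi]
  set ρ : ℕ → ℝ := fun i => lam i / (1 + α i) with hρ
  set ρ0 : ℝ := LN n hn N 1 - ∑ i ∈ range (m+1), ρ i with hρ0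
  have hρpos : ∀ i < m+1, 0 < ρ i := fun i hi => div_pos (a4 i hi) (hap i hi)
  have hexL : ∀ f : ℝ[X], f.natDegree ≤ 2 * m + 2 →
      LN n hn N f = ρ0 * f.eval (-1) + ∑ i ∈ range (m+1), ρ i * f.eval (α i) := by
    intro f hf
    have hroot : (f - C (f.eval (-1))).IsRoot (-1) := by simp [IsRoot]
    obtain ⟨g, hg⟩ := dvd_iff_isRoot.2 hroot
    have hX : (X - C (-1) : ℝ[X]) = 1 + X := by simp; ring
    rw [hX] at hg
    have hfe : f = f.eval (-1) • (1 : ℝ[X]) + (1 + X) * g := by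
      rw [← hg, smul_eq_C_mul]; ring
    have hgd : g.degree < (2 * (m+1) : ℕ) := by
      by_cases hg0 : g = 0
      · rw [hg0, degree_zero]; exact WithBot.bot_lt_coe _
      have h1 : ((1 + X) * g).natDegree = 1 + g.natDegree := by
        rw [natDegree_mul one_add_X_ne hg0]
        congr 1
        rw [add_comm]; exact natDegree_X_add_C 1
      have h2 : ((1 + X) * g).natDegree ≤ 2 * m + 2 := by
        rw [← hg]; exact (natDegree_sub_C).le.trans hf
      rw [degree_eq_natDegree hg0]
      exact_mod_cast (by omega)
    have h1 := a5 g hgd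
    have h2 : LN n hn N f = f.eval (-1) * LN n hn N 1 + LN n hn N ((1 + X) * g) := by
      conv_lhs => rw [hfe]
      rw [map_add, map_smul, smul_eq_mul]
    have h3 : ∑ i ∈ range (m+1), lam i * g.eval (α i) = ∑ i ∈ range (m+1), (ρ i * f.eval (α i) - f.eval (-1) * ρ i) := by
      apply Finset.sum_congr rfl
      intro i hi
      simp only [Finset.mem_range] at hi
      have h4 := congrArg (eval (α i)) hg
      simp only [eval_sub, eval_C, eval_mul, eval_add, eval_one, eval_X] at h4
      have h5 := hap i hi
      have h6 : f.eval (α i) = f.eval (-1) + (1 + α i) * g.eval (α i) := by linarith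
      rw [h6, hρ]
      field_simp
      ring
    rw [h2, h1, h3, Finset.sum_sub_distrib, ← Finset.mul_sum, hρ0]
    ring
  set u : ℝ[X] := ∏ i ∈ range (m+1), (X - C (α i)) with hu
  have hum : u.Monic := monic_prod_of_monic _ _ (fun i _ => monic_X_sub_C _)
  have hud : u.natDegree = m + 1 := by
    rw [hu, natDegree_prod_of_monic _ _ (fun i _ => monic_X_sub_C _)]; simp
  have hu0 : ∀ i ∈ range (m+1), u.eval (α i) = 0 := by
    intro i hi
    rw [hu, eval_prod, Finset.prod_eq_zero hi (by simp)]
  have hudeg : u.degree < (m+2:ℕ) := by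
    rw [degree_eq_natDegree hum.ne_zero, hud]; exact_mod_cast (by omega)
  have hvan : ∀ g : ℝ[X], ∑ i ∈ range (m+1), ρ i * (u * g).eval (α i) = 0 := by
    intro g
    apply Finset.sum_eq_zero
    intro i hi
    rw [eval_mul, hu0 i hi]; ring
  have hρ0pos : 0 < ρ0 := by
    have h1 := pos1 n hn m N hN u hum.ne_zero hudeg
    rw [hexL _ ((natDegree_mul_le_of_le hud.le hud.le).trans (by omega)), hvan, eval_mul, add_zero] at h1
    exact pos_of_mul_pos_left h1 (mul_self_nonneg _)
  have hex : ∀ f : ℝ[X], f.natDegree ≤ 2 * m + 2 →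
        gI n hn f = f.eval 1 / N + (ρ0 * f.eval (-1) + ∑ i ∈ range (m+1), ρ i * f.eval (α i)) := by
    intro f hf
    have := hexL f hf
    rw [LN_apply] at this
    linarith
  refine ⟨α, ρ, ρ0, a1, a2, a3, hρpos, hρ0pos, hex, ?_⟩
  intro j hj
  rcases Nat.lt_or_ge j (m+1) with hjm | hjm
  · have horth : ∀ i j, i < j → j < m+1 →
        dS (m+1) α (fun a => ρ a * (1 - α a ^ 2)) (W n i * W n j) = 0 := by
      intro i j hij hj
      have d1 : ((1 - X^2) * W n i : ℝ[X]).natDegree ≤ 2 + i := by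
        refine natDegree_mul_le_of_le ?_ (W_deg n hn i).1
        compute_degree
      have h1 := hex (W n j * ((1 - X^2) * W n i)) ((natDegree_mul_le_of_le (W_deg n hn j).1 d1).trans (by omega))
      rw [I_W n hn j _ (lt_of_le_of_lt (natDegree_le_iff_degree_le.1 d1) (by exact_mod_cast (by omega)))] at h1
      simp only [eval_mul, eval_sub, eval_one, eval_pow, eval_X] at h1
      norm_num at h1
      rw [dS_apply, h1]
      apply Finset.sum_congr rfl
      intro a _
      rw [eval_mul]; ring
    obtain ⟨c, hc, he⟩ := disc (m+1) α (fun a => ρ a * (1 - α a ^ 2)) (W n) a3 (by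
      intro i hi
      refine mul_pos (hρpos i hi) ?_
      nlinarith [a1 i hi, a2 i hi]) (fun i => (W_deg n hn i).1) (fun i => (W_deg n hn i).2) (by
      intro i hi j hj hij
      rcases Nat.lt_or_ge i j with h | h
      · exact horth i j h hj
      · rw [mul_comm]; exact horth j i (by omega) hi) j hjm
    rw [he]
    exact PD.lin _ _ _ hc (PD_W n hn)
  · have : j = m + 1 := by omega
    subst this
    rw [← hu]
    set sg : ℝ := (-1)^(m+1) with hsg
    have hsg2 : sg * sg = 1 := by rw [hsg, ← mul_pow]; norm_num
    set s : ℝ := sg * u.eval (-1) with hs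
    have hus : u.eval (-1) = sg * s := by rw [hs, ← mul_assoc, hsg2, one_mul]
    have hspos : 0 < s := by
      rw [hs, hsg, hu, eval_prod]
      have : (-1:ℝ)^(m+1) = ∏ i ∈ range (m+1), (-1:ℝ) := by simp
      rw [this, ← Finset.prod_mul_distrib]
      apply Finset.prod_pos
      intro i hi
      simp only [Finset.mem_range] at hi
      simp; linarith [a1 i hi]
    have hu1 : 0 < u.eval 1 := by
      rw [hu, eval_prod]
      apply Finset.prod_pos
      intro i hi
      simp only [Finset.mem_range] at hi
      simp; linarith [a2 i hi]
    -- weight bound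
    have hw : ρ0 ≤ 1 / N := by
      have h1 := hex (W n (m+1) * W n (m+1))
        ((natDegree_mul_le_of_le (W_deg n hn (m+1)).1 (W_deg n hn (m+1)).1).trans (by omega))
      rw [I_WW] at h1
      simp only [eval_mul] at h1
      rw [(W_eval_one n hn (m+1)).1, W_eval_neg_one n hn (m+1), ← hsg] at h1
      have h2 : 0 ≤ ∑ i ∈ range (m+1), ρ i * ((W n (m+1)).eval (α i) * (W n (m+1)).eval (α i)) := by
        apply Finset.sum_nonneg
        intro i hi
        simp only [Finset.mem_range] at hi
        exact mul_nonneg (hρpos i hi).le (mul_self_nonneg _)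
      set d := dd n (m+1) with hd
      have h3 : d * (d / N + ρ0 * d) ≤ d * 1 := by
        have e : sg * d * (sg * d) = d * d := by rw [show sg * d * (sg * d) = (sg*sg) * (d*d) by ring, hsg2, one_mul]
        rw [e] at h1
        have : d * (d / N + ρ0 * d) = d * d / N + ρ0 * (d * d) := by ring
        linarith
      have h4 := le_of_mul_le_mul_left h3 hdd1
      rw [le_div_iff₀ hN0]
      have h5 : d + ρ0 * N * d ≤ N := by
        have := mul_le_mul_of_nonneg_right h4 hN0.le
        rw [add_mul, div_mul_cancel₀ _ hN0.ne'] at this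
        linarith
      nlinarith
    have hyz : ρ0 * s ≤ u.eval 1 / N := by
      have h1 := hex (u * W n m) ((natDegree_mul_le_of_le hud.le (W_deg n hn m).1).trans (by omega))
      rw [hvan, mul_comm u, I_W n hn m u hudeg, eval_mul, eval_mul, (W_eval_one n hn m).1, W_eval_neg_one n hn m, hus] at h1
      have e : (-1:ℝ)^m * sg = -1 := by
        rw [hsg, pow_succ, ← mul_assoc, ← mul_pow]; norm_num
      have h2 : u.eval 1 - s = 2 * dd n m * (u.eval 1 / N - ρ0 * s) := by
        have e1 : (-1:ℝ)^m * (sg * s) = - s := by rw [← mul_assoc, e]; ring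
        have e2 : ρ0 * ((-1)^m * dd n m * (sg * s)) = - (ρ0 * dd n m * s) := by
          rw [show ρ0 * ((-1)^m * dd n m * (sg * s)) = ρ0 * dd n m * ((-1)^m * (sg * s)) by ring, e1]; ring
        rw [e1, e2] at h1
        rw [mul_sub, ← mul_div_assoc] 
        have : dd n m * u.eval 1 / N * 2 = 2 * dd n m * u.eval 1 / N := by ring
        linarith
      by_contra hcon
      push Not at hcon
      have h3 : ρ0 * s ≤ s / N := by
        have := mul_le_mul_of_nonneg_right hw hspos.le
        rw [one_div, inv_mul_eq_div] at this; exact this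
      have h4 : ρ0 * s - u.eval 1 / N ≤ (s - u.eval 1) / N := by rw [sub_div]; linarith
      have h5 : s - u.eval 1 = 2 * dd n m * (ρ0 * s - u.eval 1 / N) := by linarith
      have h6 : 0 < ρ0 * s - u.eval 1 / N := by linarith
      rw [le_div_iff₀ hN0] at h4
      nlinarith
    intro l
    rcases lt_trichotomy l (m+1) with hl | hl | hl
    · have h1 := hex (u * G n l) ((natDegree_mul_le_of_le hud.le (G_deg n hn l).1.1).trans (by omega))
      rw [hvan, eval_mul, eval_mul, (G_eval_one n hn l).1, (G_eval_neg_one n hn l).1, hus] at h1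
      rw [h1]
      have h2 : 0 < ρ0 * s := mul_pos hρ0pos hspos
      have h3 : sg * (-1)^l = 1 ∨ sg * (-1)^l = -1 := by
        rw [hsg, ← pow_add]; exact neg_one_pow_eq_or ℝ _
      have h4 : ρ0 * (sg * s * (-1)^l) = ρ0 * s * (sg * (-1)^l) := by ring
      rw [h4]
      rw [mul_one]
      rcases h3 with h3 | h3 <;> rw [h3] <;> linarith
    · subst hl
      obtain ⟨c, hc⟩ := G_expand n hn (m+2) u hudeg
      have h1 : gI n hn (u * G n (m+1)) = c (m+1) * gI n hn (G n (m+1) * G n (m+1)) := by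
        conv_lhs => rw [hc]
        exact I_sum n hn (m+2) c (m+1) (by omega)
      have h2 : u.coeff (m+1) = c (m+1) * (G n (m+1)).coeff (m+1) := by
        conv_lhs => rw [hc]
        rw [finsetSum_coeff, Finset.sum_range_succ, Finset.sum_eq_zero, zero_add, coeff_C_mul]
        intro l hl
        simp only [Finset.mem_range] at hl
        rw [coeff_C_mul, coeff_eq_zero_of_natDegree_lt (lt_of_le_of_lt (G_deg n hn l).1.1 hl), mul_zero]
      have h3 : u.coeff (m+1) = 1 := by rw [← hud]; exact hum
      have h4 := (G_deg n hn (m+1)).1.2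
      have h5 : 0 < c (m+1) := by
        have : 0 < c (m+1) * (G n (m+1)).coeff (m+1) := by rw [← h2, h3]; norm_num
        exact pos_of_mul_pos_left this h4.le
      rw [h1]
      exact (mul_pos h5 (I_sq_pos n hn _ (G_ne n hn _))).le
    · rw [I_G_of_deg n hn (m+2) u hudeg l (by omega)]

theorem DGS_odd (n m : ℕ) (hn : 2 ≤ n) : (DGS n (2*m+1) : ℝ) = 2 * dd n m := by
  unfold DGS dd
  rw [if_pos (by omega), show n + (2*m+1+1)/2 - 2 = n + m - 1 by omega]
  push_cast; ring

theorem DGS_even (n m : ℕ) (hn : 2 ≤ n) : (DGS n (2*m+2) : ℝ) = dd n (m+1) + dd n m := by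
  unfold DGS dd
  rw [if_neg (by omega), show n + (2*m+2)/2 - 1 = n + (m+1) - 1 by omega, show n + (2*m+2)/2 - 2 = n + m - 1 by omega]
  push_cast; ring

theorem main_aux (n : ℕ) (hn : 2 ≤ n)
    (P : ℕ → Polynomial ℝ) (hP : IsGegenbauer n P)
    (k ε : ℕ) (hk : 1 ≤ k) (hε : ε ≤ 1)
    (N : ℝ) (hN1 : (DGS n (2 * k - 1 + ε) : ℝ) < N)
    (hN2 : N ≤ (DGS n (2 * k + ε) : ℝ)) :
    ∃ α ρ : Fin (k + ε) → ℝ,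
      IsQuadratureRule n N α ρ (polySpace (2 * k - 1 + ε)) ∧
      ∀ h : ℝ → ℝ, AbsMonOn h →
        ∃ f : Polynomial ℝ, f.natDegree ≤ 2 * k - 1 + ε ∧
          (∀ i : ℕ, 1 ≤ i → 0 ≤ gegInt n (fun t => f.eval t * (P i).eval t)) ∧
          (∀ t ∈ Set.Ico (-1 : ℝ) 1, f.eval t ≤ h t) ∧
          ∀ i, f.eval (α i) = h (α i) := by
  have hPD : ∀ f : ℝ[X], PD n hn f → ∀ i : ℕ, 1 ≤ i → 0 ≤ gegInt n (fun t => f.eval t * (P i).eval t) := by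
    intro f hf i _
    have := hf i
    rw [← P_eq_G n hn P hP i, gI_apply] at this
    simpa only [eval_mul] using this
  obtain ⟨m, rfl⟩ : ∃ m, k = m + 1 := ⟨k - 1, by omega⟩
  rcases Nat.le_one_iff_eq_zero_or_eq_one.1 hε with rfl | rfl
  · rw [show 2 * (m+1) - 1 + 0 = 2 * m + 1 by omega] at hN1 ⊢
    rw [DGS_odd n m hn] at hN1
    obtain ⟨α, ρ, a1, a2, a3, a4, a5, a6⟩ := case0 n hn m N hN1
    refine ⟨fun i => α i, fun i => ρ i, ⟨fun i => (a1 i i.2).le, fun i => a2 i i.2, fun i j hij => a3 i j hij j.2,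
      fun i => a4 i i.2, ?_⟩, ?_⟩
    · rintro f ⟨p, hp, rfl⟩
      have := a5 p hp
      rw [gI_apply] at this
      rw [this, ← Fin.sum_univ_eq_sum_range (fun i => ρ i * p.eval (α i)) (m+1)]
    · intro h hh
      have hI : ∀ i < m+1, α i ∈ Set.Ico (-1:ℝ) 1 := fun i hi => ⟨(a1 i hi).le, a2 i hi⟩
      obtain ⟨f, g, f1, f2, f3, f4⟩ := newton n hn (m+1) α hI a6 h (PS_of_AbsMonOn h hh) (m+1) le_rfl
      refine ⟨f, by omega, hPD f f2, ?_, ?_⟩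
      · intro t ht
        rw [f4 t ht]
        have := mul_nonneg (sq_nonneg ((∏ i ∈ range (m+1), (X - C (α i))).eval t)) (PS_nonneg f3 t ht)
        linarith
      · intro i
        rw [f4 (α i) (hI i i.2), eval_prod, Finset.prod_eq_zero (i := (i:ℕ)) (by simpa using i.2) (by simp)]
        simp
  · rw [show 2 * (m+1) - 1 + 1 = 2 * m + 2 by omega] at hN1 ⊢
    rw [show 2 * (m+1) + 1 = 2 * (m+1) + 1 by omega, DGS_odd n (m+1) hn] at hN2
    rw [DGS_even n m hn] at hN1
    obtain ⟨α, ρ, ρ0, a1, a2, a3, a4, a40, a5, a6⟩ := case1 n hn m N hN1 hN2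
    let A : ℕ → ℝ := fun i => Nat.casesOn i (-1) α
    let R : ℕ → ℝ := fun i => Nat.casesOn i ρ0 ρ
    have hA : ∀ i < m + 2, A i ∈ Set.Ico (-1:ℝ) 1 := by
      intro i hi
      cases i with
      | zero => simp [A]
      | succ i => exact ⟨(a1 i (by omega)).le, a2 i (by omega)⟩
    refine ⟨fun i => A i, fun i => R i, ⟨fun i => (hA i i.2).1, fun i => (hA i i.2).2, ?_, ?_, ?_⟩, ?_⟩
    · rintro ⟨i, hi⟩ ⟨j, hj⟩ hij
      simp only [Fin.mk_lt_mk] at hij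
      cases j with
      | zero => omega
      | succ j =>
        cases i with
        | zero => exact a1 j (by omega)
        | succ i => exact a3 i j (by omega) (by omega)
    · rintro ⟨i, hi⟩
      cases i with
      | zero => exact a40
      | succ i => exact a4 i (by omega)
    · rintro f ⟨p, hp, rfl⟩
      have := a5 p hp
      rw [gI_apply] at this
      rw [this]
      have e := Fin.sum_univ_eq_sum_range (fun i => R i * p.eval (A i)) (m+1+1)
      rw [Finset.sum_range_succ'] at e
      rw [e]
      rw [add_comm (∑ k ∈ range (m + 1), R (k + 1) * eval (A (k + 1)) p)]
      rfl
    · intro h hh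
      have hI : ∀ i < m+1, α i ∈ Set.Ico (-1:ℝ) 1 := fun i hi => ⟨(a1 i hi).le, a2 i hi⟩
      obtain ⟨f, g, f1, f2, f3, f4⟩ := newton n hn (m+1) α hI a6 h (PS_of_AbsMonOn h hh) (m+1) le_rfl
      have hm1 : (-1:ℝ) ∈ Set.Ico (-1:ℝ) 1 := by norm_num
      obtain ⟨g1, hg1, e1⟩ := PS_div f3 (-1) hm1
      have hU := a6 (m+1) le_rfl
      set U : ℝ[X] := ∏ i ∈ range (m+1), (X - C (α i)) with hUdef
      have hUd : U.natDegree = m + 1 := by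
        rw [hUdef, natDegree_prod_of_monic _ _ (fun i _ => monic_X_sub_C _)]; simp
      have hU0 : ∀ i < m+1, U.eval (α i) = 0 := by
        intro i hi
        rw [hUdef, eval_prod, Finset.prod_eq_zero (i := (i:ℕ)) (by simpa using hi) (by simp)]
      refine ⟨f + g (-1) • (U * U), ?_, hPD _ (f2.add (PD.smul (PS_nonneg f3 _ hm1) (hU.mul hU))), ?_, ?_⟩
      · refine natDegree_add_le_of_degree_le (by omega) ((natDegree_smul_le _ _).trans ?_)
        exact (natDegree_mul_le_of_le hUd.le hUd.le).trans (by omega)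
      · intro t ht
        rw [f4 t ht, e1 t ht]
        simp only [eval_add, eval_smul, eval_mul, smul_eq_mul]
        have := mul_nonneg (sq_nonneg (U.eval t)) (mul_nonneg (show 0 ≤ t - -1 by linarith [ht.1]) (PS_nonneg hg1 t ht))
        linarith
      · rintro ⟨i, hi⟩
        cases i with
        | zero =>
          change eval (-1) _ = h (-1)
          rw [f4 (-1) hm1]
          simp only [eval_add, eval_smul, eval_mul, smul_eq_mul]
          ring
        | succ i =>
          change eval (α i) _ = h (α i)
          rw [f4 (α i) (hI i (by omega))]
          simp only [eval_add, eval_smul, eval_mul, smul_eq_mul, hU0 i (by omega)]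
          ring

end helpers

/-- `𝒫_τ` is a ULB-space for `D(n,τ) < N ≤ D(n,τ+1)`. -/
theorem stmt_6 (n : ℕ) (hn : 2 ≤ n)
    (P : ℕ → Polynomial ℝ) (hP : IsGegenbauer n P)
    (k ε : ℕ) (hk : 1 ≤ k) (hε : ε ≤ 1)
    (N : ℝ) (hN1 : (DGS n (2 * k - 1 + ε) : ℝ) < N)
    (hN2 : N ≤ (DGS n (2 * k + ε) : ℝ)) :
    ∃ α ρ : Fin (k + ε) → ℝ,
      IsQuadratureRule n N α ρ (polySpace (2 * k - 1 + ε)) ∧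
      ∀ h : ℝ → ℝ, AbsMonOn h →
        ∃ f : Polynomial ℝ, f.natDegree ≤ 2 * k - 1 + ε ∧
          (∀ i : ℕ, 1 ≤ i → 0 ≤ gegInt n (fun t => f.eval t * (P i).eval t)) ∧
          (∀ t ∈ Set.Ico (-1 : ℝ) 1, f.eval t ≤ h t) ∧
          ∀ i, f.eval (α i) = h (α i) := by
  exact main_aux n hn P hP k ε hk hε N hN1 hN2
end

section
/- Let n ≥ 2, k ≥ 2, N > 0, and let {(α_i,ρ_i)}_{i=1}^k be a 1/N-quadrature rule exact for the space 𝒫_{2k-1} of real polynomials of degree at most 2k-1; define the test functions Q_j = 1/N + ∑_{i=1}^k ρ_i P_j^{(n)}(α_i) for j ∈ ℕ. If Q_{2k+2} ≠ 0 or Q_{2k+3} ≠ 0, then every 1/N-quadrature rule exact for Λ_{n,k} has at least k+1 (distinct) nodes. -/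
open MeasureTheory Finset
open scoped Classical

/-- Membership of a polynomial in `Λ_{n,k} = 𝒫_{2k-1} ⊕ span{P_{2k+2}, P_{2k+3}}`:
degree at most `2k+3` and orthogonality to `P_{2k}` and `P_{2k+1}` in `L²(μ_n)`. -/
def InLambda (n k : ℕ) (P : ℕ → Polynomial ℝ) (p : Polynomial ℝ) : Prop :=
  p.natDegree ≤ 2 * k + 3 ∧
    gegInt n (fun t => p.eval t * (P (2 * k)).eval t) = 0 ∧
    gegInt n (fun t => p.eval t * (P (2 * k + 1)).eval t) = 0

/-- The space `Λ_{n,k}`, as a set of functions on `ℝ`. -/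
def LambdaSpace (n k : ℕ) (P : ℕ → Polynomial ℝ) : Set (ℝ → ℝ) :=
  {f | ∃ p : Polynomial ℝ, InLambda n k P p ∧ f = fun t => p.eval t}


lemma gegInt_lin (n : ℕ) (p q : Polynomial ℝ) (c : ℝ) :
    gegInt n (fun t => (p + Polynomial.C c * q).eval t) =
      gegInt n (fun t => p.eval t) + c * gegInt n (fun t => q.eval t) := by
  by_cases h : IntegrableOn (gegWeight n) (Set.Icc (-1 : ℝ) 1) volume
  · have hi : ∀ r : Polynomial ℝ,
        IntegrableOn (fun t => r.eval t * gegWeight n t) (Set.Icc (-1 : ℝ) 1) volume := fun r =>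
      h.continuousOn_mul r.continuous.continuousOn isCompact_Icc
    have e : ∫ t in Set.Icc (-1 : ℝ) 1, (p + Polynomial.C c * q).eval t * gegWeight n t =
        (∫ t in Set.Icc (-1 : ℝ) 1, p.eval t * gegWeight n t) +
          c * ∫ t in Set.Icc (-1 : ℝ) 1, q.eval t * gegWeight n t := by
      rw [← integral_const_mul, ← integral_add (hi p) ((hi q).const_mul c)]
      congr 1
      ext t
      simp
      ring
    unfold gegInt
    rw [e]
    ring
  · have h0 : ∫ t in Set.Icc (-1 : ℝ) 1, gegWeight n t = 0 := integral_undef h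
    simp [gegInt, h0]

lemma gegInt_orth (n : ℕ) (P : ℕ → Polynomial ℝ) (hP : IsGegenbauer n P) (i : ℕ) :
    ∀ d ≤ i, ∀ p : Polynomial ℝ, p.degree < (d : ℕ) →
      gegInt n (fun t => p.eval t * (P i).eval t) = 0 := by
  intro d
  induction d with
  | zero =>
    intro _ p hp
    have : p = 0 := by
      rw [← Polynomial.degree_eq_bot]
      simpa using hp
    simp [this, gegInt]
  | succ d ih =>
    intro hd p hp
    have hne : P d ≠ 0 := by
      intro h
      have := hP.2.1 d
      simp [h] at this
    have hlc : (P d).coeff d ≠ 0 := by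
      have := Polynomial.leadingCoeff_ne_zero.mpr hne
      rwa [Polynomial.leadingCoeff, hP.1 d] at this
    set c := p.coeff d / (P d).coeff d with hc
    have hq : (p - Polynomial.C c * P d).degree < (d : ℕ) := by
      rw [Polynomial.degree_lt_iff_coeff_zero] at hp ⊢
      intro m hm
      rw [Polynomial.coeff_sub, Polynomial.coeff_C_mul]
      rcases hm.eq_or_lt with rfl | hm
      · rw [hc]; field_simp; ring
      · rw [hp m hm, Polynomial.coeff_eq_zero_of_natDegree_lt (by rw [hP.1 d]; exact hm)]
        ring
    have h1 := ih (by omega) _ hq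
    have h2 := hP.2.2 d i (by omega)
    have h3 := gegInt_lin n ((p - Polynomial.C c * P d) * P i) (P d * P i) c
    have e : (p - Polynomial.C c * P d) * P i + Polynomial.C c * (P d * P i) = p * P i := by ring
    rw [e] at h3
    simp only [Polynomial.eval_mul] at h3
    rw [h3, h2, h1]
    ring

theorem stmt_7 (n : ℕ) (hn : 2 ≤ n) (k : ℕ) (hk : 2 ≤ k) (N : ℝ) (hN : 0 < N)
    (P : ℕ → Polynomial ℝ) (hP : IsGegenbauer n P)
    (α ρ : Fin k → ℝ)
    (hquad : IsQuadratureRule n N α ρ (polySpace (2 * k - 1)))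
    (hQ : (1 / N + ∑ i, ρ i * (P (2 * k + 2)).eval (α i)) ≠ 0 ∨
          (1 / N + ∑ i, ρ i * (P (2 * k + 3)).eval (α i)) ≠ 0) :
    ∀ (m : ℕ) (β θ : Fin m → ℝ),
      IsQuadratureRule n N β θ (LambdaSpace n k P) → k + 1 ≤ m := by
  intro m β θ hβ
  by_contra hm
  obtain ⟨-, -, -, -, hα⟩ := hquad
  obtain ⟨-, -, -, -, hβ⟩ := hβ
  -- the two rules agree on every polynomial
  have key : ∀ f : Polynomial ℝ, ∑ i, ρ i * f.eval (α i) = ∑ i, θ i * f.eval (β i) := by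
    intro f
    set s : Finset ℝ := univ.image α ∪ univ.image β with hs
    have hcard : s.card ≤ 2 * k := by
      have h2 : (univ.image α).card ≤ k := card_image_le.trans (by simp)
      have h3 : (univ.image β).card ≤ m := card_image_le.trans (by simp)
      rw [hs]
      exact (card_union_le _ _).trans ((add_le_add h2 h3).trans (by omega))
    set g := Lagrange.interpolate s id (fun x => f.eval x) with hg
    have hinj : Set.InjOn (id : ℝ → ℝ) (s : Set ℝ) := Function.injective_id.injOn
    have hdeg : g.degree < ((2 * k : ℕ) : WithBot ℕ) :=
      (Lagrange.degree_interpolate_lt _ hinj).trans_le (by exact_mod_cast hcard)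
    have hev : ∀ x ∈ s, g.eval x = f.eval x := fun x hx =>
      Lagrange.eval_interpolate_at_node (v := id) _ hinj hx
    have hnat : g.natDegree ≤ 2 * k - 1 := by
      have : g.natDegree < 2 * k := by
        by_cases h0 : g = 0
        · rw [h0, Polynomial.natDegree_zero]; omega
        · exact (Polynomial.natDegree_lt_iff_degree_lt h0).mpr hdeg
      omega
    have ha := hα _ ⟨g, hnat, rfl⟩
    have hb := hβ _ ⟨g, ⟨by omega, gegInt_orth n P hP (2 * k) (2 * k) le_rfl g hdeg,
      gegInt_orth n P hP (2 * k + 1) (2 * k) (by omega) g hdeg⟩, rfl⟩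
    have e1 : ∑ i, ρ i * g.eval (α i) = ∑ i, ρ i * f.eval (α i) :=
      sum_congr rfl fun i _ => by rw [hev _ (by simp [hs])]
    have e2 : ∑ i, θ i * g.eval (β i) = ∑ i, θ i * f.eval (β i) :=
      sum_congr rfl fun i _ => by rw [hev _ (by simp [hs])]
    linarith
  have zero : ∀ j, 2 * k + 2 ≤ j → j ≤ 2 * k + 3 →
      1 / N + ∑ i, ρ i * (P j).eval (α i) = 0 := by
    intro j h1 h2
    have h0 := gegInt_orth n P hP j 1 (by omega) 1 (by rw [Polynomial.degree_one]; norm_num)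
    have hb := hβ _ ⟨P j, ⟨by rw [hP.1 j]; exact h2, hP.2.2 j _ (by omega),
      hP.2.2 j _ (by omega)⟩, rfl⟩
    simp only [Polynomial.eval_one, one_mul] at h0
    simp only [hP.2.1 j] at hb
    rw [key (P j), ← hb, h0]
  rcases hQ with h | h
  · exact h (zero _ le_rfl (by omega))
  · exact h (zero _ (by omega) le_rfl)
end

section
/- Let n ≥ 2, k ≥ 2, N > 0, and let c_1, c_2, c_3 ∈ ℝ; set r(t) = P_{k+1}^{1,0}(t) + c_1 P_k^{1,0}(t) + c_2 P_{k-1}^{1,0}(t) + c_3 P_{k-2}^{1,0}(t). Then: (a) r has at least k-1 distinct real roots, of which at least k-2 lie in [-1,1) (in particular, r has at most one pair of non-real conjugate roots). (b) Suppose moreover that r has k+1 distinct real roots -1 ≤ β_1 < ⋯ < β_{k+1} < 1; that ∫ r dμ_n = r(1)/N; that ∫ (1-t)·r(t)·u(t) dμ_n = 0 for every real polynomial u of degree at most k+1 such that ∫ (1-t)·r(t)·u(t)·P_{2k}^{(n)}(t) dμ_n = ∫ (1-t)·r(t)·u(t)·P_{2k+1}^{(n)}(t) dμ_n = 0; and that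 the weights θ_i := (∫ ℓ_i dμ_n)/ℓ_i(β_i), where ℓ_i(t) = (t-1)·∏_{j≠i}(t-β_j), are all positive. Then {(β_i,θ_i)}_{i=1}^{k+1} is a 1/N-quadrature rule exact for Λ_{n,k}. -/
open MeasureTheory Finset
open scoped Classical

/-- Integration against the probability measure `ν_n` on `[-1,1]` with density
proportional to `(1-t)(1 - t²)^((n-3)/2)`. -/
noncomputable def adjInt (n : ℕ) (f : ℝ → ℝ) : ℝ :=
  (∫ t in Set.Icc (-1 : ℝ) 1, (1 - t) * gegWeight n t)⁻¹ *
    ∫ t in Set.Icc (-1 : ℝ) 1, f t * ((1 - t) * gegWeight n t)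

/-- `Q : ℕ → ℝ[X]` is the family of adjacent polynomials `P_i^{1,0}` for dimension `n`:
`deg Q_i = i`, `Q_i(1) = 1`, pairwise orthogonal in `L²(ν_n)`. -/
def IsAdjacent (n : ℕ) (Q : ℕ → Polynomial ℝ) : Prop :=
  (∀ i, (Q i).natDegree = i) ∧ (∀ i, (Q i).eval 1 = 1) ∧
    ∀ i j, i ≠ j → adjInt n (fun t => (Q i).eval t * (Q j).eval t) = 0

open Polynomial in
/-- A polynomial becomes of constant sign on `(-1,1)` after multiplication by
finitely many linear factors at its roots. -/
lemma exists_sign_factor (m : ℕ) : ∀ p : ℝ[X], p.natDegree = m → p ≠ 0 →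
    ∃ S : Finset ℝ, (∀ x ∈ S, p.eval x = 0 ∧ -1 < x ∧ x < 1) ∧
      ((∀ t ∈ Set.Ioo (-1 : ℝ) 1, 0 ≤ (p * ∏ x ∈ S, (X - C x)).eval t) ∨
       (∀ t ∈ Set.Ioo (-1 : ℝ) 1, (p * ∏ x ∈ S, (X - C x)).eval t ≤ 0)) := by
  induction m with
  | zero =>
    intro p hp _
    rw [natDegree_eq_zero] at hp
    obtain ⟨c, rfl⟩ := hp
    refine ⟨∅, by simp, ?_⟩
    rcases le_total 0 c with h | h
    · left; simp [h]
    · right; simp [h]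
  | succ m ih =>
    intro p hp hp0
    by_cases h : ∃ a ∈ Set.Ioo (-1 : ℝ) 1, p.eval a = 0
    · obtain ⟨a, ha, hpa⟩ := h
      obtain ⟨q, rfl⟩ := dvd_iff_isRoot.mpr hpa
      have hq0 : q ≠ 0 := right_ne_zero_of_mul hp0
      have hq : q.natDegree = m := by
        rw [natDegree_mul (X_sub_C_ne_zero a) hq0, natDegree_X_sub_C] at hp
        omega
      obtain ⟨S, hS, hs⟩ := ih q hq hq0
      by_cases haS : a ∈ S
      · refine ⟨S.erase a, ?_, ?_⟩
        · intro x hx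
          have := hS x (Finset.mem_of_mem_erase hx)
          simp [this]
        · have e : (X - C a) * q * ∏ x ∈ S.erase a, (X - C x) = q * ∏ x ∈ S, (X - C x) := by
            rw [← Finset.mul_prod_erase S _ haS]; ring
          rw [e]; exact hs
      · refine ⟨insert a S, ?_, ?_⟩
        · intro x hx
          rcases Finset.mem_insert.mp hx with rfl | hx
          · exact ⟨hpa, ha.1, ha.2⟩
          · have := hS x hx
            simp [this]
        · have e : (X - C a) * q * ∏ x ∈ insert a S, (X - C x)
              = (X - C a) ^ 2 * (q * ∏ x ∈ S, (X - C x)) := by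
            rw [Finset.prod_insert haS]; ring
          rw [e]
          rcases hs with hs | hs
          · left; intro t ht
            rw [eval_mul]
            exact mul_nonneg (by simp [sq_nonneg]) (hs t ht)
          · right; intro t ht
            rw [eval_mul]
            exact mul_nonpos_of_nonneg_of_nonpos (by simp [sq_nonneg]) (hs t ht)
    · refine ⟨∅, by simp, ?_⟩
      simp only [Finset.prod_empty, mul_one]
      by_contra hc
      push Not at hc
      obtain ⟨⟨x, hx, hx'⟩, y, hy, hy'⟩ := hc
      apply h
      have hpc : IsPreconnected (Set.Ioo (-1 : ℝ) 1) := isPreconnected_Ioo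
      have := hpc.intermediate_value hx hy (f := fun t => p.eval t) p.continuous.continuousOn
      obtain ⟨a, ha, ha'⟩ := this ⟨hx'.le, hy'.le⟩
      exact ⟨a, ha, ha'⟩

open Polynomial in
lemma outside_root_core (h : ℝ[X]) (ho : Odd h.natDegree) (hl : 0 < h.leadingCoeff)
    (hs : ∀ t ∈ Set.Ioo (-1 : ℝ) 1, 0 ≤ h.eval t) :
    ∃ x, (x ≤ -1 ∨ 1 ≤ x) ∧ h.eval x = 0 := by
  have h1 : 0 ≤ h.eval (-1) := by
    have hcl : IsClosed {t : ℝ | 0 ≤ h.eval t} := isClosed_le continuous_const h.continuous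
    have := closure_minimal (s := Set.Ioo (-1 : ℝ) 1) (fun t ht => hs t ht) hcl
    rw [closure_Ioo (by norm_num)] at this
    exact this (by simp)
  have hd : (h.comp (-X)).natDegree = h.natDegree := by simp [natDegree_comp]
  have hlc : (h.comp (-X)).leadingCoeff = - h.leadingCoeff := by
    rw [leadingCoeff_comp (by simp)]
    simp [ho.neg_one_pow]
  have ht := tendsto_atBot_of_leadingCoeff_nonpos (h.comp (-X))
    (natDegree_pos_iff_degree_pos.1 (by rw [hd]; exact ho.pos)) (by rw [hlc]; linarith)
  obtain ⟨y, hy, hy'⟩ := ((ht.eventually (Filter.eventually_lt_atBot 0)).and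
    (Filter.eventually_gt_atTop 1)).exists
  simp only [eval_comp, eval_neg, eval_X] at hy
  have := intermediate_value_Icc (f := fun t => h.eval t) (a := -y) (b := -1) (by linarith)
    h.continuous.continuousOn
  obtain ⟨x, hx, hx'⟩ := this ⟨hy.le, h1⟩
  exact ⟨x, Or.inl hx.2, hx'⟩

open Polynomial in
lemma outside_root (h : ℝ[X]) (ho : Odd h.natDegree)
    (hs : (∀ t ∈ Set.Ioo (-1 : ℝ) 1, 0 ≤ h.eval t) ∨
      (∀ t ∈ Set.Ioo (-1 : ℝ) 1, h.eval t ≤ 0)) :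
    ∃ x, (x ≤ -1 ∨ 1 ≤ x) ∧ h.eval x = 0 := by
  have hd : (h.comp (-X)).natDegree = h.natDegree := by simp [natDegree_comp]
  have hlc : (h.comp (-X)).leadingCoeff = - h.leadingCoeff := by
    rw [leadingCoeff_comp (by simp)]
    simp [ho.neg_one_pow]
  have h0 : h.leadingCoeff ≠ 0 := by
    intro h0
    rw [leadingCoeff_eq_zero] at h0
    simp [h0] at ho
  have flip : ∀ x : ℝ, (-x ≤ -1 ∨ 1 ≤ -x) → (x ≤ -1 ∨ 1 ≤ x) := by
    intro x hx
    rcases hx with hx | hx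
    · right; linarith
    · left; linarith
  rcases hs with hs | hs <;> rcases lt_or_gt_of_ne h0 with hl | hl
  · obtain ⟨x, hx, hx'⟩ := outside_root_core (h.comp (-X)) (by rwa [hd]) (by rw [hlc]; linarith)
      (by
        intro t ht
        simpa using hs (-t) ⟨by linarith [ht.2], by linarith [ht.1]⟩)
    exact ⟨-x, flip _ (by simpa using hx), by simpa using hx'⟩
  · exact outside_root_core h ho hl hs
  · obtain ⟨x, hx, hx'⟩ := outside_root_core (-h) (by rwa [natDegree_neg])
      (by rw [leadingCoeff_neg]; linarith)
      (by intro t ht; simpa using hs t ht)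
    exact ⟨x, hx, by simpa using hx'⟩
  · obtain ⟨x, hx, hx'⟩ := outside_root_core (-(h.comp (-X))) (by rwa [natDegree_neg, hd])
      (by rw [leadingCoeff_neg, hlc]; linarith)
      (by
        intro t ht
        simpa using hs (-t) ⟨by linarith [ht.2], by linarith [ht.1]⟩)
    exact ⟨-x, flip _ (by simpa using hx), by simpa using hx'⟩

lemma gegWeight_integrable (n : ℕ) (hn : 2 ≤ n) :
    IntegrableOn (gegWeight n) (Set.Icc (-1 : ℝ) 1) := by
  have h := Polynomial.Chebyshev.intervalIntegrable_sqrt_one_sub_sq_inv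
  rw [intervalIntegrable_iff, Set.uIoc_of_le (by norm_num),
    integrableOn_Ioc_iff_integrableOn_Ioo] at h
  rw [integrableOn_Icc_iff_integrableOn_Ioo]
  refine Integrable.mono' h ?_ ?_
  · refine Measurable.aestronglyMeasurable ?_
    unfold gegWeight
    fun_prop
  · refine ae_restrict_of_forall_mem measurableSet_Ioo fun t ht => ?_
    have h1 : 0 < 1 - t ^ 2 := by nlinarith [ht.1, ht.2]
    have h2 : 1 - t ^ 2 ≤ 1 := by nlinarith [sq_nonneg t]
    have hn' : (2 : ℝ) ≤ n := by exact_mod_cast hn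
    unfold gegWeight
    rw [Real.norm_of_nonneg (Real.rpow_nonneg h1.le _), Real.sqrt_eq_rpow,
      Real.inv_rpow h1.le, ← Real.rpow_neg h1.le]
    exact Real.rpow_le_rpow_of_exponent_ge h1 h2 (by linarith)

open Polynomial in
lemma poly_integrable (n : ℕ) (hn : 2 ≤ n) (p : ℝ[X]) :
    IntegrableOn (fun t => p.eval t * gegWeight n t) (Set.Icc (-1 : ℝ) 1) :=
  (gegWeight_integrable n hn).continuousOn_mul p.continuous.continuousOn isCompact_Icc

open Polynomial in
/-- Integration of polynomials against the unnormalized weight, as a linear map. -/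
noncomputable def wInt (n : ℕ) (hn : 2 ≤ n) : ℝ[X] →ₗ[ℝ] ℝ where
  toFun p := ∫ t in Set.Icc (-1 : ℝ) 1, p.eval t * gegWeight n t
  map_add' p q := by
    rw [← integral_add (poly_integrable n hn p) (poly_integrable n hn q)]
    simp [add_mul]
  map_smul' c p := by
    rw [RingHom.id_apply, smul_eq_mul, ← integral_const_mul]
    simp [mul_assoc]

open Polynomial in
lemma wInt_pos (n : ℕ) (hn : 2 ≤ n) (p : ℝ[X]) (hp : p ≠ 0)
    (hs : ∀ t ∈ Set.Ioo (-1 : ℝ) 1, 0 ≤ p.eval t) : 0 < wInt n hn p := by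
  change 0 < ∫ t in Set.Icc (-1 : ℝ) 1, p.eval t * gegWeight n t
  have hi := poly_integrable n hn p
  rw [integral_Icc_eq_integral_Ioo]
  rw [integrableOn_Icc_iff_integrableOn_Ioo] at hi
  have hw : ∀ t ∈ Set.Ioo (-1 : ℝ) 1, 0 < gegWeight n t := fun t ht =>
    Real.rpow_pos_of_pos (by nlinarith [ht.1, ht.2]) _
  rw [setIntegral_pos_iff_support_of_nonneg_ae
    (ae_restrict_of_forall_mem measurableSet_Ioo fun t ht =>
      mul_nonneg (hs t ht) (hw t ht).le) hi]
  have hsub : Set.Ioo (-1 : ℝ) 1 \ (p.roots.toFinset : Set ℝ) ⊆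
      Function.support (fun t => p.eval t * gegWeight n t) ∩ Set.Ioo (-1 : ℝ) 1 := by
    intro t ht
    refine ⟨mul_ne_zero ?_ (hw t ht.1).ne', ht.1⟩
    intro h
    apply ht.2
    simp [hp, h]
  refine lt_of_lt_of_le ?_ (measure_mono hsub)
  rw [measure_sdiff_null (Finset.measure_zero _ _)]
  simp

open Polynomial in
lemma gegInt_eq (n : ℕ) (hn : 2 ≤ n) (p : ℝ[X]) :
    gegInt n (fun t => p.eval t) = (wInt n hn 1)⁻¹ * wInt n hn p := by
  simp [gegInt, wInt]

open Polynomial in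
lemma adjInt_eq (n : ℕ) (hn : 2 ≤ n) (p : ℝ[X]) :
    adjInt n (fun t => p.eval t) = (wInt n hn (1 - X))⁻¹ * wInt n hn (p * (1 - X)) := by
  simp [adjInt, wInt, mul_assoc]

open Polynomial in
/-- A linear functional vanishing on a triangular family vanishes on low degree polynomials. -/
lemma vanish_of_triangular (L : ℝ[X] →ₗ[ℝ] ℝ) (Q : ℕ → ℝ[X]) (hQ : ∀ i, (Q i).natDegree = i)
    (hQ0 : ∀ i, Q i ≠ 0) (m : ℕ) (hL : ∀ i < m, L (Q i) = 0) :
    ∀ p : ℝ[X], p.degree < m → L p = 0 := by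
  induction m with
  | zero =>
    intro p hp
    have : p = 0 := by simpa [Polynomial.degree_lt_iff_coeff_zero, Polynomial.ext_iff] using hp
    simp [this]
  | succ m ih =>
    intro p hp
    have hlc : (Q m).coeff m ≠ 0 := by
      have := leadingCoeff_ne_zero.mpr (hQ0 m)
      rwa [leadingCoeff, hQ m] at this
    have hd : (p - (p.coeff m / (Q m).coeff m) • Q m).degree < m := by
      rw [degree_lt_iff_coeff_zero]
      intro j hj
      rcases hj.eq_or_lt with rfl | hj
      · simp [hlc]
      · have h1 : p.coeff j = 0 := (degree_lt_iff_coeff_zero _ _).1 hp j (by omega)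
        have h2 : (Q m).coeff j = 0 := coeff_eq_zero_of_natDegree_lt (by rw [hQ m]; omega)
        simp [h1, h2]
    have := ih (fun i hi => hL i (by omega)) _ hd
    rw [map_sub, map_smul, hL m (by omega)] at this
    simpa using this

open Polynomial in
lemma part_a (n : ℕ) (hn : 2 ≤ n) (k : ℕ) (hk : 2 ≤ k)
    (Q : ℕ → Polynomial ℝ) (hQadj : IsAdjacent n Q)
    (c₁ c₂ c₃ : ℝ) (r : Polynomial ℝ)
    (hr : r = Q (k + 1) + Polynomial.C c₁ * Q k + Polynomial.C c₂ * Q (k - 1) +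
        Polynomial.C c₃ * Q (k - 2)) (hrd : r.natDegree = k + 1) :
    ∃ S : Finset ℝ, (∀ x ∈ S, r.eval x = 0) ∧ k - 1 ≤ S.card ∧
        k - 2 ≤ (S.filter (fun x => -1 ≤ x ∧ x < 1)).card := by
  obtain ⟨hQd, hQ1, hQo⟩ := hQadj
  have hQ0 : ∀ i, Q i ≠ 0 := by
    intro i h
    have := hQ1 i
    simp [h] at this
  have hr0 : r ≠ 0 := by
    intro h
    simp [h] at hrd
  have hX : (1 - X : ℝ[X]) ≠ 0 := by
    intro h
    have := congrArg (eval 0) h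
    simp at this
  have hXpos : 0 < wInt n hn (1 - X) := by
    refine wInt_pos n hn _ hX ?_
    intro t ht
    simp [ht.2.le]
  have horth : ∀ i j, i ≠ j → wInt n hn (Q i * Q j * (1 - X)) = 0 := by
    intro i j hij
    have h := hQo i j hij
    have e := adjInt_eq n hn (Q i * Q j)
    simp only [eval_mul] at e
    rw [e] at h
    exact (mul_eq_zero.1 h).resolve_left (inv_ne_zero hXpos.ne')
  obtain ⟨S, hS, hs⟩ := exists_sign_factor _ r rfl hr0
  set g : ℝ[X] := ∏ x ∈ S, (X - C x) with hg
  have hgm : g.Monic := monic_prod_of_monic _ _ fun x _ => monic_X_sub_C x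
  have hgd : g.natDegree = S.card := by
    rw [hg, natDegree_prod_of_monic _ _ fun x _ => monic_X_sub_C x]
    simp
  have hrg0 : r * g * (1 - X) ≠ 0 := mul_ne_zero (mul_ne_zero hr0 hgm.ne_zero) hX
  have hne : wInt n hn (r * g * (1 - X)) ≠ 0 := by
    rcases hs with hs | hs
    · refine (wInt_pos n hn _ hrg0 ?_).ne'
      intro t ht
      rw [eval_mul]
      exact mul_nonneg (hs t ht) (by simp [ht.2.le])
    · have := wInt_pos n hn (-(r * g * (1 - X))) (neg_ne_zero.2 hrg0) (by
        intro t ht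
        rw [eval_neg, eval_mul]
        have h1 : 0 ≤ (1 - X : ℝ[X]).eval t := by simp [ht.2.le]
        have := mul_nonpos_of_nonpos_of_nonneg (hs t ht) h1
        linarith)
      rw [map_neg] at this
      linarith
  have hcard : k - 2 ≤ S.card := by
    by_contra hlt
    push Not at hlt
    apply hne
    have hv := vanish_of_triangular
      ((wInt n hn).comp (LinearMap.mulLeft ℝ (r * (1 - X)))) Q hQd hQ0 (k - 2) (by
        intro i hi
        have e : r * (1 - X) * Q i = Q (k + 1) * Q i * (1 - X) + c₁ • (Q k * Q i * (1 - X)) +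
            c₂ • (Q (k - 1) * Q i * (1 - X)) + c₃ • (Q (k - 2) * Q i * (1 - X)) := by
          rw [hr]; simp only [smul_eq_C_mul]; ring
        simp only [LinearMap.comp_apply, LinearMap.mulLeft_apply]
        rw [e]
        simp only [map_add, map_smul]
        rw [horth _ _ (by omega), horth _ _ (by omega), horth _ _ (by omega),
          horth _ _ (by omega)]
        simp) g (by
        rw [degree_eq_natDegree hgm.ne_zero, hgd]
        exact_mod_cast hlt)
    simp only [LinearMap.comp_apply, LinearMap.mulLeft_apply] at hv
    rw [← hv]; congr 1; ring
  have hfilt : S.filter (fun x => -1 ≤ x ∧ x < 1) = S := by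
    apply Finset.filter_true_of_mem
    intro x hx
    have := hS x hx
    exact ⟨this.2.1.le, this.2.2⟩
  by_cases hc : k - 1 ≤ S.card
  · refine ⟨S, fun x hx => (hS x hx).1, hc, ?_⟩
    rw [hfilt]; exact hcard
  · have hSk : S.card = k - 2 := by omega
    have hodd : Odd (r * g).natDegree := by
      rw [natDegree_mul hr0 hgm.ne_zero, hrd, hgd, hSk]
      exact ⟨k - 1, by omega⟩
    obtain ⟨y, hy, hy0⟩ := outside_root (r * g) hodd hs
    have hyS : y ∉ S := by
      intro h
      have := hS y h
      rcases hy with hy | hy <;> linarith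
    have hgy : g.eval y ≠ 0 := by
      rw [hg, eval_prod, Finset.prod_ne_zero_iff]
      intro x hx
      simp only [eval_sub, eval_X, eval_C]
      intro h
      apply hyS
      rwa [sub_eq_zero.1 h]
    rw [eval_mul] at hy0
    refine ⟨insert y S, ?_, ?_, ?_⟩
    · intro x hx
      rcases Finset.mem_insert.1 hx with rfl | hx
      · exact (mul_eq_zero.1 hy0).resolve_right hgy
      · exact (hS x hx).1
    · rw [Finset.card_insert_of_notMem hyS]; omega
    · refine hcard.trans ?_
      conv_lhs => rw [← hfilt]
      exact Finset.card_le_card (Finset.filter_subset_filter _ (Finset.subset_insert _ _))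

open Polynomial in
lemma r_natDegree (k : ℕ) (hk : 2 ≤ k) (Q : ℕ → ℝ[X]) (hQd : ∀ i, (Q i).natDegree = i)
    (c₁ c₂ c₃ : ℝ) : (Q (k + 1) + C c₁ * Q k + C c₂ * Q (k - 1) +
        C c₃ * Q (k - 2)).natDegree = k + 1 := by
  have h : ∀ (c : ℝ) (i : ℕ), (C c * Q i).natDegree ≤ i := fun c i =>
    (natDegree_C_mul_le c (Q i)).trans (hQd i).le
  have h0 := hQd (k + 1)
  have h1 : (Q (k + 1) + C c₁ * Q k).natDegree = k + 1 := by
    rw [natDegree_add_eq_left_of_natDegree_lt, h0]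
    have := h c₁ k
    omega
  have h2 : (Q (k + 1) + C c₁ * Q k + C c₂ * Q (k - 1)).natDegree = k + 1 := by
    rw [natDegree_add_eq_left_of_natDegree_lt, h1]
    have := h c₂ (k - 1)
    omega
  rw [natDegree_add_eq_left_of_natDegree_lt, h2]
  have := h c₃ (k - 2)
  omega

open Polynomial in
lemma part_b (n : ℕ) (hn : 2 ≤ n) (k : ℕ) (hk : 2 ≤ k) (N : ℝ)
    (P : ℕ → Polynomial ℝ) (hP : IsGegenbauer n P)
    (r : Polynomial ℝ) (hrd : r.natDegree = k + 1)
    (β θ : Fin (k + 1) → ℝ) (hβ : StrictMono β) (hβ1 : ∀ i, β i < 1)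
    (hroot : ∀ i, r.eval (β i) = 0)
    (hrint : gegInt n (fun t => r.eval t) = r.eval 1 / N)
    (hu : ∀ u : Polynomial ℝ, u.natDegree ≤ k + 1 →
        gegInt n (fun t => (1 - t) * r.eval t * u.eval t * (P (2 * k)).eval t) = 0 →
        gegInt n (fun t => (1 - t) * r.eval t * u.eval t * (P (2 * k + 1)).eval t) = 0 →
        gegInt n (fun t => (1 - t) * r.eval t * u.eval t) = 0)
    (hθ : ∀ i, θ i =
        gegInt n (fun t => (t - 1) * ∏ j ∈ Finset.univ.erase i, (t - β j)) /
          ((β i - 1) * ∏ j ∈ Finset.univ.erase i, (β i - β j)))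
    (p : ℝ[X]) (hp : InLambda n k P p) :
    gegInt n (fun t => p.eval t) = p.eval 1 / N + ∑ i, θ i * p.eval (β i) := by
  obtain ⟨hPd, hP1, hPo⟩ := hP
  obtain ⟨hpd, hp1, hp2⟩ := hp
  have hP0 : ∀ i, P i ≠ 0 := by
    intro i h
    have := hP1 i
    simp [h] at this
  obtain ⟨G, hG⟩ : ∃ G : ℝ[X] →ₗ[ℝ] ℝ, ∀ q : ℝ[X], gegInt n (fun t => q.eval t) = G q :=
    ⟨(wInt n hn 1)⁻¹ • wInt n hn, fun q => by rw [gegInt_eq n hn]; rfl⟩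
  have hGo : ∀ (m : ℕ) (v : ℝ[X]), v.degree < (m : WithBot ℕ) → G (v * P m) = 0 := by
    intro m v hv
    have := vanish_of_triangular (G.comp (LinearMap.mulRight ℝ (P m))) P hPd hP0 m (by
      intro i hi
      have h := hPo i m hi.ne
      have e := hG (P i * P m)
      simp only [eval_mul] at e
      rw [e] at h
      simpa using h) v hv
    simpa using this
  have hr0 : r ≠ 0 := by
    intro h
    simp [h] at hrd
  have hlc : r.leadingCoeff ≠ 0 := leadingCoeff_ne_zero.2 hr0
  set g : ℝ[X] := ∏ j, (X - C (β j)) with hg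
  have hgm : g.Monic := monic_prod_of_monic _ _ fun x _ => monic_X_sub_C _
  have hgd : g.natDegree = k + 1 := by
    rw [hg, natDegree_prod_of_monic _ _ fun x _ => monic_X_sub_C _]
    simp
  have hrg : r = C r.leadingCoeff * g := by
    refine eq_of_degree_le_of_eval_index_eq (v := β) Finset.univ hβ.injective.injOn ?_ ?_ ?_ ?_
    · rw [degree_eq_natDegree hr0, hrd]; simp
    · rw [degree_C_mul hlc, degree_eq_natDegree hr0, degree_eq_natDegree hgm.ne_zero, hrd, hgd]
    · rw [leadingCoeff_mul, leadingCoeff_C, hgm.leadingCoeff, mul_one]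
    · intro i _
      rw [hroot i, hg, eval_mul, eval_prod, Finset.prod_eq_zero (Finset.mem_univ i)] <;> simp
  have hr1 : r.eval 1 ≠ 0 := by
    rw [hrg, hg, eval_mul, eval_prod, eval_C]
    refine mul_ne_zero hlc (Finset.prod_ne_zero_iff.2 fun i _ => ?_)
    have := hβ1 i
    simp only [eval_sub, eval_X, eval_C]
    linarith
  set s : ℝ[X] := (X - C 1) * g with hs
  have hsm : s.Monic := (monic_X_sub_C 1).mul hgm
  have hsd : s.natDegree = k + 2 := by
    rw [hs, natDegree_mul (X_sub_C_ne_zero 1) hgm.ne_zero, hgd, natDegree_X_sub_C]; ring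
  set v := p %ₘ s with hv
  set u₀ := p /ₘ s with hu₀
  have hdiv : v + s * u₀ = p := modByMonic_add_div p s
  have hvd : v.degree < ((k + 2 : ℕ) : WithBot ℕ) := by
    rw [← hsd, ← degree_eq_natDegree hsm.ne_zero]
    exact degree_modByMonic_lt p hsm
  have hu₀d : u₀.natDegree ≤ k + 1 := by
    rw [hu₀, natDegree_divByMonic _ hsm, hsd]; omega
  have hsu : (1 - X) * r * (C (-r.leadingCoeff⁻¹) * u₀) = s * u₀ := by
    conv_lhs => rw [hrg]
    have : C r.leadingCoeff * C (-r.leadingCoeff⁻¹) = (-1 : ℝ[X]) := by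
      rw [← C_mul, mul_neg, mul_inv_cancel₀ hlc]; simp
    calc _ = (C r.leadingCoeff * C (-r.leadingCoeff⁻¹)) * ((1 - X) * g * u₀) := by
          rw [leadingCoeff_mul, leadingCoeff_C, hgm.leadingCoeff, mul_one]; ring
      _ = _ := by rw [this, hs, map_one]; ring
  have hGsu : G (s * u₀) = 0 := by
    have key : ∀ m, 2 * k ≤ m → G (p * P m) = 0 → G (s * u₀ * P m) = 0 := by
      intro m hm h
      have h1 : G (v * P m) = 0 := hGo m v (hvd.trans_le (by exact_mod_cast (by omega)))
      have h2 : s * u₀ * P m = p * P m - v * P m := by rw [← hdiv]; ring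
      rw [h2, map_sub, h, h1, sub_zero]
    have e0 := hG ((1 - X) * r * (C (-r.leadingCoeff⁻¹) * u₀))
    have e1 := hG ((1 - X) * r * (C (-r.leadingCoeff⁻¹) * u₀) * P (2 * k))
    have e2 := hG ((1 - X) * r * (C (-r.leadingCoeff⁻¹) * u₀) * P (2 * k + 1))
    have f1 := hG (p * P (2 * k))
    have f2 := hG (p * P (2 * k + 1))
    rw [hsu] at e0 e1 e2
    have E : ∀ t : ℝ, (s * u₀).eval t =
        (1 - t) * r.eval t * (C (-r.leadingCoeff⁻¹) * u₀).eval t := by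
      intro t
      rw [← hsu, eval_mul, eval_mul]; simp
    simp only [eval_mul (p := s * u₀) (q := P (2 * k)),
      eval_mul (p := s * u₀) (q := P (2 * k + 1)), E] at e0 e1 e2
    simp only [eval_mul (p := p)] at f1 f2
    rw [← e0]
    refine hu _ ((natDegree_C_mul_le _ _).trans hu₀d) ?_ ?_
    · rw [e1]; exact key _ le_rfl (by rw [← f1]; exact hp1)
    · rw [e2]; exact key _ (by omega) (by rw [← f2]; exact hp2)
  set l : Fin (k + 1) → ℝ[X] := fun i => (X - C 1) * ∏ j ∈ Finset.univ.erase i, (X - C (β j))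
    with hl
  have hleval : ∀ i t, (l i).eval t = (t - 1) * ∏ j ∈ Finset.univ.erase i, (t - β j) := by
    intro i t
    simp [hl, eval_prod]
  have hlm : ∀ i, (l i).Monic := fun i =>
    (monic_X_sub_C 1).mul (monic_prod_of_monic _ _ fun x _ => monic_X_sub_C _)
  have hld : ∀ i, (l i).natDegree = k + 1 := by
    intro i
    rw [hl]
    simp only
    rw [(monic_X_sub_C 1).natDegree_mul (monic_prod_of_monic _ _ fun x _ => monic_X_sub_C _),
      natDegree_prod_of_monic _ _ fun x _ => monic_X_sub_C _, natDegree_X_sub_C]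
    simp [add_comm]
  have hlne : ∀ i, (l i).eval (β i) ≠ 0 := by
    intro i
    rw [hleval]
    refine mul_ne_zero (by have := hβ1 i; linarith) (Finset.prod_ne_zero_iff.2 fun j hj => ?_)
    rw [sub_ne_zero]
    exact fun h => (Finset.ne_of_mem_erase hj) (hβ.injective h).symm
  have hlzero : ∀ i j, i ≠ j → (l i).eval (β j) = 0 := by
    intro i j hij
    rw [hleval, Finset.prod_eq_zero (i := j)]
    · simp
    · simp [hij.symm]
    · simp
  have hl1 : ∀ i, (l i).eval 1 = 0 := by
    intro i; rw [hleval]; simp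
  have hvlag : v = (v.eval 1 / r.eval 1) • r +
      ∑ i, (v.eval (β i) / (l i).eval (β i)) • l i := by
    have hcard : #(insert 1 (Finset.univ.image β)) = k + 2 := by
      rw [Finset.card_insert_of_notMem, Finset.card_image_of_injective _ hβ.injective]
      · simp
      · simp only [Finset.mem_image, Finset.mem_univ, true_and, not_exists]
        exact fun i => (hβ1 i).ne
    refine eq_of_degrees_lt_of_eval_finset_eq (insert 1 (Finset.univ.image β)) ?_ ?_ ?_
    · rw [hcard]; exact hvd
    · rw [hcard, ← mem_degreeLT]
      refine Submodule.add_mem _ (Submodule.smul_mem _ _ ?_)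
        (Submodule.sum_mem _ fun i _ => Submodule.smul_mem _ _ ?_)
      · rw [mem_degreeLT, degree_eq_natDegree hr0, hrd]
        exact_mod_cast (by omega)
      · rw [mem_degreeLT, degree_eq_natDegree (hlm i).ne_zero, hld]
        exact_mod_cast (by omega)
    · intro x hx
      rcases Finset.mem_insert.1 hx with rfl | hx
      · simp [eval_finsetSum, hl1, hr1]
      · obtain ⟨i, _, rfl⟩ := Finset.mem_image.1 hx
        rw [eval_add, eval_smul, hroot, eval_finsetSum, Finset.sum_eq_single i]
        · simp [hlne i]
        · intro j _ hj
          simp [hlzero j i hj]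
        · simp
  have hs1 : s.eval 1 = 0 := by simp [hs]
  have hsβ : ∀ i, s.eval (β i) = 0 := by
    intro i
    rw [hs, eval_mul, hg, eval_prod, Finset.prod_eq_zero (Finset.mem_univ i)] <;> simp
  have hpv1 : p.eval 1 = v.eval 1 := by rw [← hdiv]; simp [hs1]
  have hpvβ : ∀ i, p.eval (β i) = v.eval (β i) := by
    intro i
    rw [← hdiv]; simp [hsβ]
  have hθ' : ∀ i, θ i = G (l i) / (l i).eval (β i) := by
    intro i
    rw [hθ i, ← hG, hleval]
    simp only [hleval]
  rw [hG] at hrint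
  have hGv : G v = v.eval 1 / r.eval 1 * G r +
      ∑ i, (v.eval (β i) / (l i).eval (β i)) * G (l i) := by
    conv_lhs => rw [hvlag]
    simp only [map_add, map_sum, map_smul, smul_eq_mul]
  rw [hG, hpv1]
  have hGp : G p = G v := by
    conv_lhs => rw [← hdiv]
    rw [map_add, hGsu, add_zero]
  rw [hGp, hGv, hrint]
  congr 1
  · field_simp
  · refine Finset.sum_congr rfl fun i _ => ?_
    rw [hpvβ, hθ']; ring

/-- roots of `r = P_{k+1}^{1,0} + c₁P_k^{1,0} + c₂P_{k-1}^{1,0} + c₃P_{k-2}^{1,0}`,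
and the resulting second-level `1/N`-quadrature rule for `Λ_{n,k}`. -/
theorem stmt_9 (n : ℕ) (hn : 2 ≤ n) (k : ℕ) (hk : 2 ≤ k) (N : ℝ) (hN : 0 < N)
    (P : ℕ → Polynomial ℝ) (hP : IsGegenbauer n P)
    (Q : ℕ → Polynomial ℝ) (hQadj : IsAdjacent n Q)
    (c₁ c₂ c₃ : ℝ) (r : Polynomial ℝ)
    (hr : r = Q (k + 1) + Polynomial.C c₁ * Q k + Polynomial.C c₂ * Q (k - 1) +
        Polynomial.C c₃ * Q (k - 2)) :
    (∃ S : Finset ℝ, (∀ x ∈ S, r.eval x = 0) ∧ k - 1 ≤ S.card ∧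
        k - 2 ≤ (S.filter (fun x => -1 ≤ x ∧ x < 1)).card) ∧
    ∀ β θ : Fin (k + 1) → ℝ, StrictMono β → -1 ≤ β 0 → β (Fin.last k) < 1 →
      (∀ i, r.eval (β i) = 0) →
      gegInt n (fun t => r.eval t) = r.eval 1 / N →
      (∀ u : Polynomial ℝ, u.natDegree ≤ k + 1 →
        gegInt n (fun t => (1 - t) * r.eval t * u.eval t * (P (2 * k)).eval t) = 0 →
        gegInt n (fun t => (1 - t) * r.eval t * u.eval t * (P (2 * k + 1)).eval t) = 0 →
        gegInt n (fun t => (1 - t) * r.eval t * u.eval t) = 0) →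
      (∀ i, θ i =
        gegInt n (fun t => (t - 1) * ∏ j ∈ Finset.univ.erase i, (t - β j)) /
          ((β i - 1) * ∏ j ∈ Finset.univ.erase i, (β i - β j))) →
      (∀ i, 0 < θ i) →
      IsQuadratureRule n N β θ (LambdaSpace n k P) := by
  have hrd : r.natDegree = k + 1 := by
    rw [hr]; exact r_natDegree k hk Q hQadj.1 c₁ c₂ c₃
  refine ⟨part_a n hn k hk Q hQadj c₁ c₂ c₃ r hr hrd, ?_⟩
  intro β θ hβ hβ0 hβl hroot hrint hu hθ hpos
  have hβ1 : ∀ i, β i < 1 := fun i => (hβ.monotone (Fin.le_last i)).trans_lt hβl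
  refine ⟨fun i => hβ0.trans (hβ.monotone (Fin.zero_le i)), hβ1, hβ, hpos, ?_⟩
  rintro f ⟨p, hp, rfl⟩
  exact part_b n hn k hk N P hP r hrd β θ hβ hβ1 hroot hrint hu hθ p hp
end

section
/- Let n ≥ 2, k ≥ 2, and let -1 < β_1 < ⋯ < β_{k+1} < 1 with q_{k+1}(t) = ∏_{i=1}^{k+1}(t-β_i). Assume the determinant condition (∫ t·q_{k+1}(t)²·P_{2k}^{(n)}(t) dμ_n)·(∫ q_{k+1}(t)²·P_{2k+1}^{(n)}(t) dμ_n) ≠ (∫ t·q_{k+1}(t)²·P_{2k+1}^{(n)}(t) dμ_n)·(∫ q_{k+1}(t)²·P_{2k}^{(n)}(t) dμ_n). Then for every function h absolutely monotone on [-1,1) there exists a unique polynomial f ∈ Λ_{n,k} such that f(β_i) = h(β_i) and f'(β_i) = h'(β_i) for i = 1,…,k+1. -/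
open MeasureTheory Finset
open scoped Classical

/-- If the weight is not integrable, the normalized integral is identically zero. -/
lemma gegInt_eq_zero_of_not_integrable (n : ℕ)
    (hw : ¬ IntegrableOn (gegWeight n) (Set.Icc (-1 : ℝ) 1)) (f : ℝ → ℝ) :
    gegInt n f = 0 := by
  unfold gegInt
  rw [integral_undef hw]
  simp

/-- Integration against a fixed polynomial, as a linear functional on polynomials. -/
lemma exists_gegLin (n : ℕ) (Q : Polynomial ℝ) :
    ∃ L : Polynomial ℝ →ₗ[ℝ] ℝ,
      ∀ p : Polynomial ℝ, L p = gegInt n (fun t => p.eval t * Q.eval t) := by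
  by_cases hw : IntegrableOn (gegWeight n) (Set.Icc (-1 : ℝ) 1)
  · have hint : ∀ p : Polynomial ℝ,
        IntegrableOn (fun t => p.eval t * Q.eval t * gegWeight n t) (Set.Icc (-1 : ℝ) 1) := by
      intro p
      exact hw.continuousOn_mul (g := fun t => p.eval t * Q.eval t)
        (by fun_prop) isCompact_Icc
    refine ⟨{ toFun := fun p => gegInt n (fun t => p.eval t * Q.eval t), map_add' := ?_,
              map_smul' := ?_ }, fun p => rfl⟩
    · intro p r
      unfold gegInt
      rw [← mul_add, ← integral_add (hint p) (hint r)]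
      congr 2
      ext t
      simp only [Polynomial.eval_add]
      ring
    · intro c p
      unfold gegInt
      simp only [Polynomial.eval_smul, smul_eq_mul, RingHom.id_apply]
      simp only [mul_assoc]
      rw [integral_const_mul]
      ring
  · exact ⟨0, fun p => by simp [gegInt_eq_zero_of_not_integrable n hw]⟩

/-- A polynomial with double zeros at distinct points is divisible by the squared product. -/
lemma prod_sq_dvd {m : ℕ} (β : Fin m → ℝ) (hβ : Function.Injective β) (g : Polynomial ℝ)
    (h0 : ∀ i, g.eval (β i) = 0) (h1 : ∀ i, g.derivative.eval (β i) = 0) :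
    (∏ i, (Polynomial.X - Polynomial.C (β i))) ^ 2 ∣ g := by
  by_cases hg : g = 0
  · simp [hg]
  rw [← Finset.prod_pow]
  refine Finset.prod_dvd_of_coprime ?_ ?_
  · intro i _ j _ hij
    exact (Polynomial.isCoprime_X_sub_C_of_isUnit_sub
      (sub_ne_zero.2 (fun e => hij (hβ e))).isUnit).pow
  · intro i _
    rw [← Polynomial.le_rootMultiplicity_iff hg]
    exact (Polynomial.one_lt_rootMultiplicity_iff_isRoot hg).2 ⟨h0 i, h1 i⟩

/-- existence and uniqueness of the Hermite interpolant in `Λ_{n,k}`. -/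
theorem stmt_10 (n : ℕ) (hn : 2 ≤ n) (k : ℕ) (hk : 2 ≤ k)
    (P : ℕ → Polynomial ℝ) (hP : IsGegenbauer n P)
    (β : Fin (k + 1) → ℝ) (hβmono : StrictMono β)
    (hβ0 : -1 < β 0) (hβlast : β (Fin.last k) < 1)
    (hdet :
      gegInt n (fun t => t * (∏ i, (t - β i)) ^ 2 * (P (2 * k)).eval t) *
          gegInt n (fun t => (∏ i, (t - β i)) ^ 2 * (P (2 * k + 1)).eval t) ≠
        gegInt n (fun t => t * (∏ i, (t - β i)) ^ 2 * (P (2 * k + 1)).eval t) *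
          gegInt n (fun t => (∏ i, (t - β i)) ^ 2 * (P (2 * k)).eval t))
    (h : ℝ → ℝ) (hh : AbsMonOn h) :
    ∃! f : Polynomial ℝ, InLambda n k P f ∧
      (∀ i, f.eval (β i) = h (β i)) ∧
      (∀ i, f.derivative.eval (β i) = derivWithin h (Set.Ico (-1 : ℝ) 1) (β i)) := by
  obtain ⟨L₁, hL₁⟩ := exists_gegLin n (P (2 * k))
  obtain ⟨L₂, hL₂⟩ := exists_gegLin n (P (2 * k + 1))
  set q : Polynomial ℝ := ∏ i, (Polynomial.X - Polynomial.C (β i)) with hq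
  have hqe : ∀ t, q.eval t = ∏ i, (t - β i) := by
    intro t
    simp [hq, Polynomial.eval_prod]
  have hqm : q.Monic := Polynomial.monic_prod_X_sub_C _ _
  have hqd : q.natDegree = k + 1 := by
    rw [hq, Polynomial.natDegree_finsetProd_X_sub_C_eq_card]
    simp
  have hdet' : L₁ (Polynomial.X * q ^ 2) * L₂ (q ^ 2) ≠
      L₂ (Polynomial.X * q ^ 2) * L₁ (q ^ 2) := by
    simp only [hL₁, hL₂, Polynomial.eval_mul, Polynomial.eval_pow, Polynomial.eval_X, hqe]
    exact hdet
  let E : Polynomial ℝ →ₗ[ℝ] ((Fin (k + 1) → ℝ) × (Fin (k + 1) → ℝ)) × (ℝ × ℝ) :=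
    ((LinearMap.pi fun i => Polynomial.leval (β i)).prod
      (LinearMap.pi fun i => (Polynomial.leval (β i)).comp Polynomial.derivative)).prod
      (L₁.prod L₂)
  let T := E.comp (Polynomial.degreeLT ℝ (2 * k + 4)).subtype
  have hE : ∀ p, E p = ((fun i => p.eval (β i), fun i => p.derivative.eval (β i)),
      (L₁ p, L₂ p)) := fun p => rfl
  have hmem : ∀ p : Polynomial ℝ, p ∈ Polynomial.degreeLT ℝ (2 * k + 4) ↔
      p.natDegree ≤ 2 * k + 3 := by
    intro p
    rw [Polynomial.mem_degreeLT]
    constructor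
    · intro hp
      by_cases hp0 : p = 0
      · simp [hp0]
      have := (Polynomial.natDegree_lt_iff_degree_lt hp0).2 hp
      omega
    · intro hp
      exact (Polynomial.natDegree_le_iff_degree_le.1 hp).trans_lt (by exact_mod_cast (by omega))
  have hinj : Function.Injective T := by
    rw [← LinearMap.ker_eq_bot, LinearMap.ker_eq_bot']
    rintro ⟨g, hg⟩ hTg
    have hEg : E g = 0 := hTg
    rw [hE] at hEg
    simp only [Prod.mk_eq_zero] at hEg
    obtain ⟨⟨h0, h1⟩, h2, h3⟩ := hEg
    have hdvd := prod_sq_dvd β hβmono.injective g (fun i => congrFun h0 i) (fun i => congrFun h1 i)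
    obtain ⟨r, hr⟩ := hdvd
    rw [← hq] at hr
    have hr1 : r.natDegree ≤ 1 := by
      by_cases hr0 : r = 0
      · simp [hr0]
      have hd := (hqm.pow 2).natDegree_mul' hr0
      rw [← hr, hqm.natDegree_pow, hqd] at hd
      have := (hmem g).1 hg
      omega
    obtain ⟨a, b, hab⟩ := Polynomial.exists_eq_X_add_C_of_natDegree_le_one hr1
    have hg' : g = a • (Polynomial.X * q ^ 2) + b • q ^ 2 := by
      rw [hr, hab, Polynomial.smul_eq_C_mul, Polynomial.smul_eq_C_mul]
      ring
    rw [hg'] at h2 h3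
    simp only [map_add, map_smul, smul_eq_mul] at h2 h3
    have hne := sub_ne_zero.2 hdet'
    have ha : a = 0 := by
      refine (mul_eq_zero.1 (?_ : a * _ = 0)).resolve_right hne
      linear_combination L₂ (q ^ 2) * h2 - L₁ (q ^ 2) * h3
    have hb : b = 0 := by
      refine (mul_eq_zero.1 (?_ : b * _ = 0)).resolve_right hne
      linear_combination L₁ (Polynomial.X * q ^ 2) * h3 - L₂ (Polynomial.X * q ^ 2) * h2
    ext1
    simp [hg', ha, hb]
  have hfin : FiniteDimensional ℝ (Polynomial.degreeLT ℝ (2 * k + 4)) :=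
    (Polynomial.degreeLTEquiv ℝ (2 * k + 4)).symm.finiteDimensional
  have hrank : Module.finrank ℝ (Polynomial.degreeLT ℝ (2 * k + 4)) =
      Module.finrank ℝ (((Fin (k + 1) → ℝ) × (Fin (k + 1) → ℝ)) × (ℝ × ℝ)) := by
    rw [(Polynomial.degreeLTEquiv ℝ (2 * k + 4)).finrank_eq]
    simp
    omega
  have hsurj : Function.Surjective T :=
    (LinearMap.injective_iff_surjective_of_finrank_eq_finrank hrank).1 hinj
  have key : ∀ f : Polynomial ℝ, (InLambda n k P f ∧
      (∀ i, f.eval (β i) = h (β i)) ∧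
      (∀ i, f.derivative.eval (β i) = derivWithin h (Set.Ico (-1 : ℝ) 1) (β i))) ↔
      (f ∈ Polynomial.degreeLT ℝ (2 * k + 4) ∧ E f = ((fun i => h (β i),
        fun i => derivWithin h (Set.Ico (-1 : ℝ) 1) (β i)), (0, 0))) := by
    intro f
    rw [hmem, hE, InLambda, ← hL₁, ← hL₂]
    simp only [Prod.mk.injEq, funext_iff]
    tauto
  obtain ⟨⟨f, hf⟩, hTf⟩ := hsurj ((fun i => h (β i),
        fun i => derivWithin h (Set.Ico (-1 : ℝ) 1) (β i)), (0, 0))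
  refine ⟨f, (key f).2 ⟨hf, hTf⟩, ?_⟩
  intro g hg
  obtain ⟨hg1, hg2⟩ := (key g).1 hg
  have : (⟨g, hg1⟩ : Polynomial.degreeLT ℝ (2 * k + 4)) = ⟨f, hf⟩ :=
    hinj ((show T ⟨g, hg1⟩ = _ from hg2).trans hTf.symm)
  exact congrArg Subtype.val this
end
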